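/- arXiv:math/0211189 — 5 statements merged into one kernel-verified Lean document; each statement's English description precedes it below -/
import Mathlib

section
/- For Lebesgue-almost every α ∈ ℝ the pair correlation of the sequence n²α modulo one is Poissonian: for all real numbers a < b, lim_{N→∞} (1/N) · #{ (j,k) : 1 ≤ j,k ≤ N, j ≠ k, and j²α − k²α ∈ [a/N, b/N] + ℤ } = b − a. -/
open MeasureTheory

/-!
For the integer sequence `x n = n ^ 2`, the number of pairs `(j, k)` with `x j * α - x k * α` close
to `0` modulo one is a sum of dilates `α ↦ f ((x j - x k) * α)` of the periodized indicator
function `f` of an interval of length `(b - a) / N`. The covariance of two dilates by `m` and `n` is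
at most `(b - a) / N * gcd (m, n) / √|m n|`, so the variance of the pair count is controlled by a
GCD sum over the differences `j ^ 2 - k ^ 2 = (j - k) * (j + k)`. Bounding the gcd by the sum of
`d` over the common divisors `d` reduces this sum to divisor sums, and it is `O(N² (log N)⁴)`.
Hence the pair correlation has variance `O((log N)⁴ / N)`, which is summable along the squares
`N = k ^ 2`, and it converges almost surely there. Monotonicity in `N` and in the interval fills in
the remaining `N`, since consecutive squares have ratio tending to `1`.
-/

open Filter ProbabilityTheory Topology

section PeriodizedIcc

/-- The `1`-periodization of the indicator function of `[p, q]`: the number of integers `m` with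
`p ≤ x + m ≤ q`. -/
noncomputable def periodizedIcc (p q x : ℝ) : ℝ :=
  (Finset.Icc ⌈p - x⌉ ⌊q - x⌋).card

variable {p q : ℝ}

lemma mem_Icc_ceil_floor_sub {x : ℝ} {m : ℤ} :
    m ∈ Finset.Icc ⌈p - x⌉ ⌊q - x⌋ ↔ p ≤ x + m ∧ x + m ≤ q := by
  rw [Finset.mem_Icc, Int.ceil_le, Int.le_floor, sub_le_iff_le_add', le_sub_iff_add_le']

lemma periodizedIcc_nonneg (p q x : ℝ) : 0 ≤ periodizedIcc p q x :=
  Nat.cast_nonneg _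

lemma periodizedIcc_eq_sub_fract (h : p ≤ q) (x : ℝ) :
    periodizedIcc p q x = q - p + 1 - Int.fract (q - x) - Int.fract (x - p) := by
  have hle : ⌈p - x⌉ ≤ ⌊q - x⌋ + 1 := by
    rw [Int.ceil_le]
    push_cast
    linarith [Int.lt_floor_add_one (q - x)]
  have hcard : ((Finset.Icc ⌈p - x⌉ ⌊q - x⌋).card : ℤ) = ⌊q - x⌋ + 1 + ⌊x - p⌋ := by
    rw [Int.card_Icc, Int.toNat_of_nonneg (sub_nonneg.2 hle), ← neg_sub x p, Int.ceil_neg,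
      sub_neg_eq_add]
  rw [periodizedIcc, ← Int.cast_natCast, hcard, Int.fract, Int.fract]
  push_cast
  ring

lemma periodizedIcc_le (h : p ≤ q) (x : ℝ) : periodizedIcc p q x ≤ q - p + 1 := by
  rw [periodizedIcc_eq_sub_fract h]
  linarith [Int.fract_nonneg (q - x), Int.fract_nonneg (x - p)]

lemma abs_periodizedIcc_le (h : p ≤ q) (x : ℝ) : |periodizedIcc p q x| ≤ q - p + 1 := by
  rw [abs_of_nonneg (periodizedIcc_nonneg p q x)]
  exact periodizedIcc_le h x

lemma periodizedIcc_periodic (h : p ≤ q) : Function.Periodic (periodizedIcc p q) 1 := by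
  intro x
  simp only [periodizedIcc_eq_sub_fract h, ← sub_sub, add_sub_right_comm x 1 p, Int.fract_sub_one,
    Int.fract_add_one]

lemma measurable_periodizedIcc (h : p ≤ q) : Measurable (periodizedIcc p q) := by
  simp only [funext (periodizedIcc_eq_sub_fract h)]
  fun_prop

lemma periodizedIcc_eq_ite (h : q - p < 1) (x : ℝ) [Decidable (∃ m : ℤ, p ≤ x + m ∧ x + m ≤ q)] :
    periodizedIcc p q x = if ∃ m : ℤ, p ≤ x + m ∧ x + m ≤ q then 1 else 0 := by
  have hiff : (Finset.Icc ⌈p - x⌉ ⌊q - x⌋).Nonempty ↔ ∃ m : ℤ, p ≤ x + m ∧ x + m ≤ q :=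
    exists_congr fun _ => mem_Icc_ceil_floor_sub
  rw [periodizedIcc]
  split_ifs with hx
  · have hle : (Finset.Icc ⌈p - x⌉ ⌊q - x⌋).card ≤ 1 := by
      refine Finset.card_le_one.2 fun m hm n hn => ?_
      rw [mem_Icc_ceil_floor_sub] at hm hn
      have hmn : |((m - n : ℤ) : ℝ)| < 1 := by
        push_cast
        rw [abs_lt]
        constructor <;> linarith
      rw [← sub_eq_zero, ← Int.abs_lt_one_iff]
      exact_mod_cast hmn
    rw [le_antisymm hle (Finset.card_pos.2 (hiff.2 hx)), Nat.cast_one]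
  · rw [Finset.not_nonempty_iff_eq_empty.1 (mt hiff.1 hx), Finset.card_empty, Nat.cast_zero]

/- The integers `n` with `u p ≤ u x + n ≤ u q` are split according to their residue
`s` modulo `u`: writing `n = s + u m`, the condition becomes `p ≤ x + s / u + m ≤ q`. -/
lemma sum_periodizedIcc_add_div (p q x : ℝ) {u : ℕ} (hu : 0 < u) :
    ∑ s ∈ Finset.range u, periodizedIcc p q (x + s / u) =
      periodizedIcc (u * p) (u * q) (u * x) := by
  have hu' : (0 : ℝ) < u := Nat.cast_pos.2 hu
  have hscale (s : ℕ) (m : ℤ) : (u : ℝ) * x + ((s + u * m : ℤ) : ℝ) = u * (x + s / u + m) := by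
    push_cast
    field_simp
    ring
  simp only [periodizedIcc, ← Nat.cast_sum, ← Finset.card_sigma]
  congr 1
  refine Finset.card_nbij' (fun y => (y.1 + u * y.2 : ℤ)) (fun n => ⟨(n % u).toNat, n / u⟩)
    ?_ ?_ ?_ ?_
  · rintro ⟨s, m⟩ hsm
    simp only [Finset.coe_sigma, Set.mem_sigma_iff, Finset.mem_coe, mem_Icc_ceil_floor_sub] at hsm ⊢
    rw [hscale]
    exact ⟨by gcongr; exact hsm.2.1, by gcongr; exact hsm.2.2⟩
  · intro n hn
    have hmod : ((n % u).toNat : ℤ) = n % u := Int.toNat_of_nonneg (Int.emod_nonneg _ (by omega))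
    have hlt : n % u < u := Int.emod_lt_of_pos _ (by omega)
    simp only [Finset.coe_sigma, Set.mem_sigma_iff, Finset.mem_coe, mem_Icc_ceil_floor_sub,
      Finset.mem_range] at hn ⊢
    rw [← Int.emod_add_mul_ediv n u, ← hmod, hscale, mul_le_mul_iff_right₀ hu',
      mul_le_mul_iff_right₀ hu'] at hn
    exact ⟨by omega, hn⟩
  · rintro ⟨s, m⟩ hsm
    have hs : s < u := by simpa using (Finset.mem_sigma.1 hsm).1
    have hmod : (s + u * m : ℤ) % u = s := by
      rw [Int.add_mul_emod_self_left, Int.emod_eq_of_lt (by omega) (by omega)]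
    have hdiv : (s + u * m : ℤ) / u = m := by
      rw [Int.add_mul_ediv_left _ _ (by omega), Int.ediv_eq_zero_of_lt (by omega) (by omega),
        zero_add]
    simp only [hmod, hdiv, Int.toNat_natCast]
  · intro n _
    simp only [Int.toNat_of_nonneg (Int.emod_nonneg n (show (u : ℤ) ≠ 0 by omega)),
      Int.emod_add_mul_ediv]

lemma sum_periodizedIcc_add_div_le (h : p ≤ q) (x : ℝ) {u : ℕ} (hu : 0 < u) :
    ∑ s ∈ Finset.range u, periodizedIcc p q (x + s / u) ≤ u * (q - p) + 1 := by
  rw [sum_periodizedIcc_add_div p q x hu, mul_sub]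
  exact periodizedIcc_le (by gcongr) _

end PeriodizedIcc

section PeriodicIntegrals

lemma intervalIntegral_comp_int_mul_add_of_periodic {f : ℝ → ℝ} (hf : Function.Periodic f 1)
    (hfi : IntervalIntegrable f volume 0 1) {m : ℤ} (hm : m ≠ 0) (c : ℝ) :
    ∫ x in (0 : ℝ)..1, f (m * x + c) = ∫ x in (0 : ℝ)..1, f x := by
  have hm' : (m : ℝ) ≠ 0 := Int.cast_ne_zero.2 hm
  have hfi' := hf.intervalIntegrable₀ one_ne_zero hfi
  have hper := hf.intervalIntegral_add_zsmul_eq m c hfi'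
  rw [hf.intervalIntegral_add_eq c 0, zero_add, zsmul_one, zsmul_eq_mul] at hper
  rw [intervalIntegral.integral_comp_mul_add f hm' c, mul_zero, mul_one, zero_add, add_comm, hper,
    smul_eq_mul, inv_mul_cancel_left₀ hm']

lemma intervalIntegral_fract : ∫ x in (0 : ℝ)..1, Int.fract x = 1 / 2 := by
  have hae : ∀ᵐ x : ℝ, x ∈ Set.uIoc 0 1 → Int.fract x = x := by
    filter_upwards [Measure.ae_ne volume 1] with x hx1 hx
    rw [Set.uIoc_of_le zero_le_one] at hx
    exact Int.fract_eq_self.2 ⟨hx.1.le, hx.2.lt_of_ne hx1⟩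
  rw [intervalIntegral.integral_congr_ae hae]
  norm_num

lemma intervalIntegrable_of_abs_le {f : ℝ → ℝ} (hf : Measurable f) {C : ℝ} (hC : ∀ x, |f x| ≤ C)
    (s t : ℝ) : IntervalIntegrable f volume s t :=
  (intervalIntegrable_const (c := C)).mono_fun' hf.aestronglyMeasurable (.of_forall hC)

lemma intervalIntegral_periodizedIcc {p q : ℝ} (h : p ≤ q) :
    ∫ x in (0 : ℝ)..1, periodizedIcc p q x = q - p := by
  have hint {f : ℝ → ℝ} (hf : Measurable f) :
      IntervalIntegrable (fun x => Int.fract (f x)) volume 0 1 :=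
    intervalIntegrable_of_abs_le (C := 1) hf.fract
      (fun x => by rw [Int.abs_fract]; exact (Int.fract_lt_one _).le) 0 1
  have hfract (m : ℤ) (hm : m ≠ 0) (c : ℝ) : ∫ x in (0 : ℝ)..1, Int.fract (m * x + c) = 1 / 2 :=
    (intervalIntegral_comp_int_mul_add_of_periodic (fun x => Int.fract_add_one x)
      (hint measurable_id) hm c).trans intervalIntegral_fract
  have hq := hfract (-1) (by decide) q
  have hp := hfract 1 (by decide) (-p)
  simp only [Int.cast_neg, Int.cast_one, neg_mul, one_mul, neg_add_eq_sub, ← sub_eq_add_neg]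
    at hp hq
  simp only [periodizedIcc_eq_sub_fract h]
  rw [intervalIntegral.integral_sub (.sub (by simp) (hint (by fun_prop))) (hint (by fun_prop)),
    intervalIntegral.integral_sub (by simp) (hint (by fun_prop)), hp, hq,
    intervalIntegral.integral_const, smul_eq_mul]
  ring

lemma intervalIntegral_periodizedIcc_int_mul {p q : ℝ} (h : p ≤ q) {m : ℤ} (hm : m ≠ 0) :
    ∫ x in (0 : ℝ)..1, periodizedIcc p q (m * x) = q - p := by
  have hint : IntervalIntegrable (periodizedIcc p q) volume 0 1 :=
    intervalIntegrable_of_abs_le (measurable_periodizedIcc h) (abs_periodizedIcc_le h) 0 1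
  simpa only [add_zero, intervalIntegral_periodizedIcc h] using
    intervalIntegral_comp_int_mul_add_of_periodic (periodizedIcc_periodic h) hint hm 0

/- Take `τ = B / (g u)`, where `g = gcd m n = m A + n B`. -/
lemma exists_mul_eq_int_and_mul_eq_inv_add_int {m n : ℤ} (hm : m ≠ 0) {u : ℕ}
    (hu : (m.gcd n * u : ℤ) ∣ m) :
    ∃ (τ : ℝ) (c d : ℤ), m * τ = c ∧ n * τ = 1 / u + d := by
  obtain ⟨e, he⟩ := hu
  have hgu : ((m.gcd n : ℝ) * u) ≠ 0 := by
    refine fun h => hm ?_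
    rw [he, show (m.gcd n * u : ℤ) = 0 by exact_mod_cast h, zero_mul]
  have hu0 : (u : ℝ) ≠ 0 := right_ne_zero_of_mul hgu
  have hm' : (m : ℝ) = m.gcd n * u * e := by exact_mod_cast he
  have hbezout : (m.gcd n : ℝ) = m * m.gcdA n + n * m.gcdB n := by
    exact_mod_cast Int.gcd_eq_gcd_ab m n
  refine ⟨m.gcdB n / (m.gcd n * u), e * m.gcdB n, -(e * m.gcdA n), ?_, ?_⟩
  · rw [hm', mul_div_assoc', mul_assoc _ (e : ℝ), mul_div_cancel_left₀ _ hgu, Int.cast_mul]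
  · rw [mul_div_assoc', div_eq_iff hgu, eq_sub_of_add_eq' hbezout.symm]
    push_cast
    linear_combination -(m.gcdA n : ℝ) * hm' - (m.gcd n : ℝ) * one_div_mul_cancel hu0

/- Translating `x` by the `τ` of `exists_mul_eq_int_and_mul_eq_inv_add_int` changes `n x` by `1 / u`
and leaves `m x` unchanged modulo one. -/
lemma nat_mul_intervalIntegral_mul_eq {f g : ℝ → ℝ} (hf : Function.Periodic f 1)
    (hg : Function.Periodic g 1) {m n : ℤ} (hm : m ≠ 0) {u : ℕ} (hu : (m.gcd n * u : ℤ) ∣ m)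
    (hfg : IntervalIntegrable (fun x => f (m * x) * g (n * x)) volume 0 1) :
    u * ∫ x in (0 : ℝ)..1, f (m * x) * g (n * x) =
      ∫ x in (0 : ℝ)..1, f (m * x) * ∑ s ∈ Finset.range u, g (n * x + s / u) := by
  obtain ⟨τ, c, d, hc, hd⟩ := exists_mul_eq_int_and_mul_eq_inv_add_int hm hu
  set φ : ℝ → ℝ := fun x => f (m * x) * g (n * x) with hφ
  have hper : Function.Periodic φ 1 := fun x => by
    simpa only [hφ, mul_add] using congr_arg₂ (· * ·) (hf.int_mul m (m * x)) (hg.int_mul n (n * x))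
  have htrans (s : ℕ) (x : ℝ) : φ (x + s * τ) = f (m * x) * g (n * x + s / u) := by
    have hms : (m : ℝ) * (x + s * τ) = m * x + (s * c : ℤ) * 1 := by
      push_cast
      rw [← hc]
      ring
    have hns : (n : ℝ) * (x + s * τ) = n * x + s / u + (s * d : ℤ) * 1 := by
      push_cast
      rw [eq_sub_of_add_eq' hd.symm]
      ring
    simp only [hφ]
    rw [hms, hns, hf.int_mul, hg.int_mul]
  have hint (s : ℕ) : IntervalIntegrable (fun x => φ (x + s * τ)) volume 0 1 := by
    simpa only [sub_self, add_sub_cancel_right] using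
      (hper.intervalIntegrable₀ one_ne_zero hfg (0 + s * τ) (1 + s * τ)).comp_add_right (s * τ)
  have hinv (s : ℕ) : ∫ x in (0 : ℝ)..1, φ (x + s * τ) = ∫ x in (0 : ℝ)..1, φ x := by
    rw [intervalIntegral.integral_comp_add_right, add_comm (1 : ℝ), zero_add,
      hper.intervalIntegral_add_eq (s * τ) 0, zero_add]
  simp only [Finset.mul_sum, ← htrans]
  rw [intervalIntegral.integral_finsetSum fun s _ => hint s,
    Finset.sum_congr rfl fun s _ => hinv s, Finset.sum_const, Finset.card_range, nsmul_eq_mul]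

end PeriodicIntegrals

section Variance

/-- The uniform distribution on `(0, 1]`, which serves as a fundamental domain of `ℝ / ℤ`. -/
noncomputable abbrev uniformUnitIoc : Measure ℝ := volume.restrict (Set.Ioc 0 1)

instance : IsProbabilityMeasure uniformUnitIoc := ⟨by simp⟩

/-- The GCD sum `∑ gcd(mᵢ, mⱼ) / √|mᵢ mⱼ|` over all pairs of indices in `s`, which bounds variances
of counting functions of dilates. -/
noncomputable def gcdSum {ι : Type*} (s : Finset ι) (m : ι → ℤ) : ℝ :=
  ∑ i ∈ s, ∑ j ∈ s, (m i).gcd (m j) / (√(m i).natAbs * √(m j).natAbs)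

lemma gcdSum_nonneg {ι : Type*} (s : Finset ι) (m : ι → ℤ) : 0 ≤ gcdSum s m :=
  Finset.sum_nonneg fun _ _ => Finset.sum_nonneg fun _ _ => by positivity

variable {p q : ℝ}

lemma integral_uniformUnitIoc (f : ℝ → ℝ) :
    ∫ x, f x ∂uniformUnitIoc = ∫ x in (0 : ℝ)..1, f x :=
  (intervalIntegral.integral_of_le zero_le_one).symm

lemma memLp_periodizedIcc_int_mul (h : p ≤ q) (m : ℤ) :
    MemLp (fun α => periodizedIcc p q (m * α)) 2 uniformUnitIoc :=
  .of_bound ((measurable_periodizedIcc h).comp (measurable_const_mul _)).aestronglyMeasurable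
    (q - p + 1) (.of_forall fun _ => abs_periodizedIcc_le h _)

lemma integral_periodizedIcc_mul_le (h : p ≤ q) {m n : ℤ} (hm : m ≠ 0) {u : ℕ} (hu : 0 < u)
    (hum : (m.gcd n * u : ℤ) ∣ m) :
    ∫ α, periodizedIcc p q (m * α) * periodizedIcc p q (n * α) ∂uniformUnitIoc ≤
      (q - p) * (q - p + 1 / u) := by
  have hu' : (0 : ℝ) < u := Nat.cast_pos.2 hu
  have hint : IntervalIntegrable (fun α => periodizedIcc p q (m * α) * periodizedIcc p q (n * α))
      volume 0 1 :=
    (intervalIntegrable_iff_integrableOn_Ioc_of_le zero_le_one).2 <|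
      (memLp_periodizedIcc_int_mul h m).integrable_mul (memLp_periodizedIcc_int_mul h n)
  have hper := periodizedIcc_periodic h
  refine le_of_mul_le_mul_left ?_ hu'
  calc u * ∫ α, periodizedIcc p q (m * α) * periodizedIcc p q (n * α) ∂uniformUnitIoc
      = ∫ α, periodizedIcc p q (m * α) *
          ∑ s ∈ Finset.range u, periodizedIcc p q (n * α + s / u) ∂uniformUnitIoc := by
        rw [integral_uniformUnitIoc, nat_mul_intervalIntegral_mul_eq hper hper hm hum hint,
          integral_uniformUnitIoc]
    _ ≤ ∫ α, periodizedIcc p q (m * α) * (u * (q - p) + 1) ∂uniformUnitIoc := by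
        refine integral_mono_of_nonneg (.of_forall fun α => ?_) ?_ (.of_forall fun α => ?_)
        · exact mul_nonneg (periodizedIcc_nonneg _ _ _)
            (Finset.sum_nonneg fun _ _ => periodizedIcc_nonneg _ _ _)
        · exact ((memLp_periodizedIcc_int_mul h m).integrable one_le_two).mul_const _
        · exact mul_le_mul_of_nonneg_left (sum_periodizedIcc_add_div_le h _ hu)
            (periodizedIcc_nonneg _ _ _)
    _ = u * ((q - p) * (q - p + 1 / u)) := by
        rw [integral_mul_const, integral_uniformUnitIoc,
          intervalIntegral_periodizedIcc_int_mul h hm]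
        field_simp

lemma covariance_periodizedIcc_le_gcd_div (h : p ≤ q) {m n : ℤ} (hm : m ≠ 0) (hn : n ≠ 0) :
    cov[fun α => periodizedIcc p q (m * α), fun α => periodizedIcc p q (n * α); uniformUnitIoc] ≤
      (q - p) * (m.gcd n / m.natAbs) := by
  obtain ⟨u, hu⟩ : m.gcd n ∣ m.natAbs := Nat.gcd_dvd_left _ _
  have hg : (m.gcd n : ℝ) ≠ 0 := by simp [Int.gcd_eq_zero_iff, hm]
  have hu0 : u ≠ 0 := by
    rintro rfl
    exact hm (by simpa using hu)
  have hum : (m.gcd n * u : ℤ) ∣ m := by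
    rw [← Int.natCast_mul, ← hu, Int.natAbs_dvd]
  rw [covariance_eq_sub (memLp_periodizedIcc_int_mul h m) (memLp_periodizedIcc_int_mul h n),
    integral_uniformUnitIoc fun α => periodizedIcc p q (m * α),
    integral_uniformUnitIoc fun α => periodizedIcc p q (n * α),
    intervalIntegral_periodizedIcc_int_mul h hm, intervalIntegral_periodizedIcc_int_mul h hn, hu,
    Nat.cast_mul, div_mul_cancel_left₀ hg, ← one_div, sub_le_iff_le_add', ← mul_add]
  exact integral_periodizedIcc_mul_le h hm (Nat.pos_of_ne_zero hu0) hum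

lemma covariance_periodizedIcc_le (h : p ≤ q) {m n : ℤ} (hm : m ≠ 0) (hn : n ≠ 0) :
    cov[fun α => periodizedIcc p q (m * α), fun α => periodizedIcc p q (n * α); uniformUnitIoc] ≤
      (q - p) * (m.gcd n / (√m.natAbs * √n.natAbs)) := by
  wlog hnm : n.natAbs ≤ m.natAbs generalizing m n
  · rw [covariance_comm, Int.gcd_comm, mul_comm √_]
    exact this hn hm (le_of_not_ge hnm)
  refine (covariance_periodizedIcc_le_gcd_div h hm hn).trans ?_
  have := Int.natAbs_pos.2 hn
  have hsqrt : √m.natAbs * √n.natAbs ≤ (m.natAbs : ℝ) := by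
    calc √m.natAbs * √n.natAbs ≤ √m.natAbs * √m.natAbs := by gcongr
      _ = m.natAbs := Real.mul_self_sqrt (Nat.cast_nonneg _)
  have := sub_nonneg.2 h
  gcongr

lemma variance_sum_periodizedIcc_le {ι : Type*} {s : Finset ι} {m : ι → ℤ}
    (hm : ∀ i ∈ s, m i ≠ 0) (h : p ≤ q) :
    Var[fun α => ∑ i ∈ s, periodizedIcc p q (m i * α); uniformUnitIoc] ≤
      (q - p) * gcdSum s m := by
  rw [variance_fun_sum' fun i _ => memLp_periodizedIcc_int_mul h (m i), gcdSum, Finset.mul_sum]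
  refine Finset.sum_le_sum fun i hi => ?_
  rw [Finset.mul_sum]
  exact Finset.sum_le_sum fun j hj => covariance_periodizedIcc_le h (hm i hi) (hm j hj)

lemma integral_sum_periodizedIcc {ι : Type*} {s : Finset ι} {m : ι → ℤ}
    (hm : ∀ i ∈ s, m i ≠ 0) (h : p ≤ q) :
    ∫ α, ∑ i ∈ s, periodizedIcc p q (m i * α) ∂uniformUnitIoc = s.card * (q - p) := by
  rw [integral_finsetSum _
    fun i _ => (memLp_periodizedIcc_int_mul h (m i)).integrable one_le_two]
  simp_rw [integral_uniformUnitIoc]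
  rw [Finset.sum_congr rfl fun i hi => intervalIntegral_periodizedIcc_int_mul h (hm i hi),
    Finset.sum_const, nsmul_eq_mul]

end Variance

section AlmostEverywhere

lemma ae_tendsto_sub_integral_of_summable_variance {Ω : Type*} {mΩ : MeasurableSpace Ω}
    {P : Measure Ω} [IsFiniteMeasure P] {X : ℕ → Ω → ℝ} (hX : ∀ k, MemLp (X k) 2 P)
    (hsum : Summable fun k => Var[X k; P]) :
    ∀ᵐ ω ∂P, Tendsto (fun k => X k ω - ∫ ω', X k ω' ∂P) atTop (𝓝 0) := by
  have hL1 (k : ℕ) : eLpNorm (fun ω => (X k ω - ∫ ω', X k ω' ∂P) ^ 2) 1 P =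
      ENNReal.ofReal (Var[X k; P]) := by
    simp only [eLpNorm_one_eq_lintegral_enorm, enorm_pow, ofReal_variance (hX k), evariance]
  have htsum : ∑' k, eLpNorm (fun ω => (X k ω - ∫ ω', X k ω' ∂P) ^ 2) 1 P ≠ ⊤ := by
    simpa only [hL1] using hsum.tsum_ofReal_ne_top
  filter_upwards [summable_norm_of_tsum_eLpNorm_ne_top le_rfl
    (fun k => ((hX k).1.sub aestronglyMeasurable_const).pow 2) htsum] with ω hω
  have hsqrt := (Real.continuous_sqrt.tendsto 0).comp hω.tendsto_atTop_zero
  rw [Real.sqrt_zero] at hsqrt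
  refine (tendsto_zero_iff_abs_tendsto_zero _).2 (hsqrt.congr fun k => ?_)
  simp only [Function.comp_apply, Pi.pow_apply, Pi.sub_apply, norm_pow, Real.norm_eq_abs, sq_abs,
    Real.sqrt_sq_eq_abs]

lemma ae_volume_of_ae_uniformUnitIoc {A : ℝ → Prop} (hA : Function.Periodic A 1)
    (h : ∀ᵐ x ∂uniformUnitIoc, A x) : ∀ᵐ x, A x := by
  have hdom := isAddFundamentalDomain_Ioc one_pos (0 : ℝ)
  rw [zero_add] at hdom
  refine hdom.measure_zero_of_invariant _ (fun g => ?_) ?_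
  · obtain ⟨_, n, rfl⟩ := g
    ext x
    have hx : A (-(n • 1) + x) = A x := by rw [neg_add_eq_sub, hA.sub_zsmul_eq]
    rw [Set.mem_vadd_set_iff_neg_vadd_mem]
    exact not_congr (iff_of_eq hx)
  · rwa [ae_iff, Measure.restrict_apply' measurableSet_Ioc] at h

end AlmostEverywhere

section DivisorSums

lemma sum_filter_dvd_Icc {β : Type*} [AddCommMonoid β] (F : ℕ → β) (M : ℕ) {e : ℕ} (he : 0 < e) :
    ∑ x ∈ Finset.Icc 1 M with e ∣ x, F x = ∑ k ∈ Finset.Icc 1 (M / e), F (e * k) := by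
  refine Finset.sum_nbij' (· / e) (e * ·) ?_ ?_ ?_ ?_ ?_
  · intro x hx
    rw [Finset.mem_filter, Finset.mem_Icc] at hx
    exact Finset.mem_Icc.2
      ⟨Nat.div_pos (Nat.le_of_dvd hx.1.1 hx.2) he, Nat.div_le_div_right hx.1.2⟩
  · intro k hk
    rw [Finset.mem_Icc, Nat.le_div_iff_mul_le he, mul_comm] at hk
    exact Finset.mem_filter.2 ⟨Finset.mem_Icc.2 ⟨Nat.mul_pos he hk.1, hk.2⟩, dvd_mul_right e k⟩
  · exact fun x hx => Nat.mul_div_cancel' (Finset.mem_filter.1 hx).2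
  · exact fun k _ => Nat.mul_div_cancel_left k he
  · exact fun x hx => by rw [Nat.mul_div_cancel' (Finset.mem_filter.1 hx).2]

lemma sum_Icc_one_div_sqrt_le (n : ℕ) : ∑ k ∈ Finset.Icc 1 n, 1 / √k ≤ 2 * √n := by
  induction n with
  | zero => simp
  | succ n ih =>
    rw [Finset.sum_Icc_succ_top (by omega)]
    have hpos : 0 < √(n + 1 : ℕ) := Real.sqrt_pos.2 (by positivity)
    have hsucc : √(n + 1 : ℕ) ^ 2 = n + 1 := by
      rw [Real.sq_sqrt (Nat.cast_nonneg _), Nat.cast_add_one]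
    have hn : √n ^ 2 = n := Real.sq_sqrt (Nat.cast_nonneg _)
    have hstep : 1 / √(n + 1 : ℕ) ≤ 2 * √(n + 1 : ℕ) - 2 * √n := by
      rw [div_le_iff₀ hpos]
      nlinarith only [hsucc, hn, sq_nonneg (√(n + 1 : ℕ) - √n)]
    linarith

lemma sum_filter_dvd_one_div_sqrt_le (M : ℕ) {e : ℕ} (he : 0 < e) :
    ∑ x ∈ Finset.Icc 1 M with e ∣ x, 1 / √x ≤ 2 * √M / e := by
  calc ∑ x ∈ Finset.Icc 1 M with e ∣ x, 1 / √x
      = 1 / √e * ∑ k ∈ Finset.Icc 1 (M / e), 1 / √k := by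
        rw [sum_filter_dvd_Icc (fun x => 1 / √x) M he, Finset.mul_sum]
        refine Finset.sum_congr rfl fun k _ => ?_
        rw [Nat.cast_mul, Real.sqrt_mul (Nat.cast_nonneg e), one_div_mul_one_div]
    _ ≤ 1 / √e * (2 * √(M / e : ℕ)) := by
        gcongr
        exact sum_Icc_one_div_sqrt_le _
    _ ≤ 1 / √e * (2 * √(M / e : ℝ)) := by
        gcongr
        exact Nat.cast_div_le
    _ = 2 * √M / (√e * √e) := by
        rw [Real.sqrt_div (Nat.cast_nonneg M)]
        field_simp
    _ = 2 * √M / e := by rw [Real.mul_self_sqrt (Nat.cast_nonneg e)]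

lemma sum_filter_dvd_mul_le {s t : Finset ℕ} {F G : ℕ → ℝ} (hF : ∀ x ∈ s, 0 ≤ F x)
    (hG : ∀ y ∈ t, 0 ≤ G y) {d : ℕ} (hd : d ≠ 0) :
    ∑ z ∈ s ×ˢ t with d ∣ z.1 * z.2, F z.1 * G z.2 ≤
      ∑ e ∈ d.divisorsAntidiagonal, (∑ x ∈ s with e.1 ∣ x, F x) * ∑ y ∈ t with e.2 ∣ y, G y := by
  have hsplit (z : ℕ × ℕ) (hz : d ∣ z.1 * z.2) :
      ∃ e ∈ d.divisorsAntidiagonal, e.1 ∣ z.1 ∧ e.2 ∣ z.2 := by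
    obtain ⟨d₁, d₂, h₁, h₂, rfl⟩ := exists_dvd_and_dvd_of_dvd_mul hz
    exact ⟨(d₁, d₂), Nat.mem_divisorsAntidiagonal.2 ⟨rfl, hd⟩, h₁, h₂⟩
  choose! e he hdvd using hsplit
  rw [← Finset.sum_fiberwise_of_maps_to fun z hz => he z (Finset.mem_filter.1 hz).2]
  refine Finset.sum_le_sum fun c _ => ?_
  rw [Finset.sum_mul_sum, ← Finset.sum_product']
  refine Finset.sum_le_sum_of_subset_of_nonneg (fun z hz => ?_) fun z hz _ => ?_
  · simp only [Finset.mem_filter, Finset.mem_product] at hz ⊢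
    obtain ⟨⟨⟨h₁, h₂⟩, hz⟩, rfl⟩ := hz
    exact ⟨⟨h₁, (hdvd z hz).1⟩, h₂, (hdvd z hz).2⟩
  · simp only [Finset.mem_filter, Finset.mem_product] at hz
    exact mul_nonneg (hF _ hz.1.1) (hG _ hz.2.1)

lemma sum_filter_dvd_mul_one_div_sqrt_le (M : ℕ) {d : ℕ} (hd : d ≠ 0) :
    ∑ z ∈ Finset.Icc 1 M ×ˢ Finset.Icc 1 M with d ∣ z.1 * z.2, 1 / √(z.1 * z.2 : ℕ) ≤
      4 * M * d.divisors.card / d := by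
  calc ∑ z ∈ Finset.Icc 1 M ×ˢ Finset.Icc 1 M with d ∣ z.1 * z.2, 1 / √(z.1 * z.2 : ℕ)
      = ∑ z ∈ Finset.Icc 1 M ×ˢ Finset.Icc 1 M with d ∣ z.1 * z.2, 1 / √z.1 * (1 / √z.2) := by
        refine Finset.sum_congr rfl fun z _ => ?_
        rw [Nat.cast_mul, Real.sqrt_mul (Nat.cast_nonneg _), one_div_mul_one_div]
    _ ≤ ∑ e ∈ d.divisorsAntidiagonal,
          (∑ x ∈ Finset.Icc 1 M with e.1 ∣ x, 1 / √x) *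
            ∑ y ∈ Finset.Icc 1 M with e.2 ∣ y, 1 / √y :=
        sum_filter_dvd_mul_le (F := fun x => 1 / √x) (G := fun y => 1 / √y)
          (fun x _ => by positivity) (fun y _ => by positivity) hd
    _ ≤ ∑ e ∈ d.divisorsAntidiagonal, 2 * √M / e.1 * (2 * √M / e.2) := by
        refine Finset.sum_le_sum fun e he => ?_
        have hne := Nat.ne_zero_of_mem_divisorsAntidiagonal he
        gcongr
        · exact sum_filter_dvd_one_div_sqrt_le M (Nat.pos_of_ne_zero hne.1)
        · exact sum_filter_dvd_one_div_sqrt_le M (Nat.pos_of_ne_zero hne.2)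
    _ = ∑ e ∈ d.divisorsAntidiagonal, (4 * M / d : ℝ) := by
        refine Finset.sum_congr rfl fun e he => ?_
        rw [div_mul_div_comm, ← Nat.cast_mul, (Nat.mem_divisorsAntidiagonal.1 he).1,
          mul_mul_mul_comm, Real.mul_self_sqrt (Nat.cast_nonneg M)]
        norm_num
    _ = 4 * M * d.divisors.card / d := by
        rw [Finset.sum_const, ← Nat.map_div_right_divisors, Finset.card_map, nsmul_eq_mul]
        ring

lemma sum_card_divisors_mul_le (D : ℕ) {F : ℕ → ℝ} (hF : ∀ n, 0 ≤ F n) :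
    ∑ n ∈ Finset.Icc 1 D, n.divisors.card * F n ≤
      ∑ a ∈ Finset.Icc 1 D, ∑ b ∈ Finset.Icc 1 D, F (a * b) := by
  calc ∑ n ∈ Finset.Icc 1 D, n.divisors.card * F n
      = ∑ n ∈ Finset.Icc 1 D, ∑ _a ∈ n.divisors, F n := by
        simp only [Finset.sum_const, nsmul_eq_mul]
    _ = ∑ a ∈ Finset.Icc 1 D, ∑ n ∈ Finset.Icc 1 D with a ∣ n, F n := by
        refine Finset.sum_comm' fun n a => ?_
        simp only [Nat.mem_divisors, Finset.mem_filter, Finset.mem_Icc]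
        constructor
        · rintro ⟨⟨hn, hnD⟩, han, _⟩
          exact ⟨⟨⟨hn, hnD⟩, han⟩, Nat.pos_of_dvd_of_pos han hn, (Nat.le_of_dvd hn han).trans hnD⟩
        · rintro ⟨⟨hn, han⟩, _⟩
          exact ⟨hn, han, Nat.ne_of_gt hn.1⟩
    _ ≤ ∑ a ∈ Finset.Icc 1 D, ∑ b ∈ Finset.Icc 1 D, F (a * b) := by
        refine Finset.sum_le_sum fun a ha => ?_
        rw [sum_filter_dvd_Icc F D (Finset.mem_Icc.1 ha).1]
        exact Finset.sum_le_sum_of_subset_of_nonneg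
          (Finset.Icc_subset_Icc_right (Nat.div_le_self _ _)) fun _ _ _ => hF _

lemma sum_card_divisors_div_le (D : ℕ) :
    ∑ n ∈ Finset.Icc 1 D, (n.divisors.card / n : ℝ) ≤ (∑ k ∈ Finset.Icc 1 D, (1 / k : ℝ)) ^ 2 := by
  have hle := sum_card_divisors_mul_le D (F := fun n => 1 / n) fun n => by positivity
  simp only [mul_one_div, Nat.cast_mul] at hle
  simpa only [sq, Finset.sum_mul_sum, one_div_mul_one_div] using hle

lemma sum_card_divisors_sq_div_le (D : ℕ) :
    ∑ n ∈ Finset.Icc 1 D, (n.divisors.card ^ 2 / n : ℝ) ≤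
      (∑ k ∈ Finset.Icc 1 D, (1 / k : ℝ)) ^ 4 := by
  calc ∑ n ∈ Finset.Icc 1 D, (n.divisors.card ^ 2 / n : ℝ)
      = ∑ n ∈ Finset.Icc 1 D, n.divisors.card * (n.divisors.card / n : ℝ) := by
        simp only [sq, mul_div_assoc]
    _ ≤ ∑ a ∈ Finset.Icc 1 D, ∑ b ∈ Finset.Icc 1 D, ((a * b).divisors.card / (a * b : ℕ) : ℝ) :=
        sum_card_divisors_mul_le D fun n => by positivity
    _ ≤ ∑ a ∈ Finset.Icc 1 D, ∑ b ∈ Finset.Icc 1 D,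
          (a.divisors.card / a : ℝ) * (b.divisors.card / b) := by
        gcongr with a _ b _
        rw [div_mul_div_comm, Nat.cast_mul]
        gcongr
        rw [← Nat.cast_mul, Nat.divisors_mul]
        exact Nat.cast_le.2 Finset.card_mul_le
    _ = (∑ n ∈ Finset.Icc 1 D, (n.divisors.card / n : ℝ)) ^ 2 := by rw [sq, Finset.sum_mul_sum]
    _ ≤ ((∑ k ∈ Finset.Icc 1 D, (1 / k : ℝ)) ^ 2) ^ 2 := by
        gcongr
        exact sum_card_divisors_div_le D
    _ = (∑ k ∈ Finset.Icc 1 D, (1 / k : ℝ)) ^ 4 := by ring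

end DivisorSums

section GcdSums

lemma gcd_div_le_sum {m n : ℤ} (hm : m ≠ 0) {D : ℕ} (hD : m.natAbs ≤ D) :
    m.gcd n / (√m.natAbs * √n.natAbs) ≤
      ∑ d ∈ Finset.Icc 1 D with d ∣ m.natAbs ∧ d ∣ n.natAbs,
        d * (1 / √m.natAbs * (1 / √n.natAbs)) := by
  have hgcd : m.gcd n ∈ (Finset.Icc 1 D).filter fun d => d ∣ m.natAbs ∧ d ∣ n.natAbs := by
    refine Finset.mem_filter.2 ⟨Finset.mem_Icc.2 ⟨Int.gcd_pos_of_ne_zero_left n hm, ?_⟩,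
      Nat.gcd_dvd_left _ _, Nat.gcd_dvd_right _ _⟩
    exact (Nat.le_of_dvd (Int.natAbs_pos.2 hm) (Nat.gcd_dvd_left _ _)).trans hD
  rw [one_div_mul_one_div, ← Finset.sum_mul, ← mul_one_div]
  gcongr
  exact Finset.single_le_sum (f := fun d : ℕ => (d : ℝ)) (fun _ _ => Nat.cast_nonneg _) hgcd

lemma gcdSum_le_sum_mul_sq {ι : Type*} {s : Finset ι} {m : ι → ℤ} {D : ℕ}
    (hm : ∀ i ∈ s, m i ≠ 0) (hD : ∀ i ∈ s, (m i).natAbs ≤ D) :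
    gcdSum s m ≤
      ∑ d ∈ Finset.Icc 1 D, d * (∑ i ∈ s with d ∣ (m i).natAbs, 1 / √(m i).natAbs) ^ 2 := by
  calc gcdSum s m
      ≤ ∑ i ∈ s, ∑ j ∈ s, ∑ d ∈ Finset.Icc 1 D with d ∣ (m i).natAbs ∧ d ∣ (m j).natAbs,
          d * (1 / √(m i).natAbs * (1 / √(m j).natAbs)) :=
        Finset.sum_le_sum fun i hi => Finset.sum_le_sum fun j _ =>
          gcd_div_le_sum (hm i hi) (hD i hi)
    _ = ∑ d ∈ Finset.Icc 1 D, ∑ ij ∈ s ×ˢ s with d ∣ (m ij.1).natAbs ∧ d ∣ (m ij.2).natAbs,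
          d * (1 / √(m ij.1).natAbs * (1 / √(m ij.2).natAbs)) := by
        simp only [Finset.sum_filter, Finset.sum_product]
        exact (Finset.sum_congr rfl fun i _ => Finset.sum_comm).trans Finset.sum_comm
    _ = ∑ d ∈ Finset.Icc 1 D, d * (∑ i ∈ s with d ∣ (m i).natAbs, 1 / √(m i).natAbs) ^ 2 := by
        refine Finset.sum_congr rfl fun d _ => ?_
        rw [sq, Finset.sum_mul_sum, ← Finset.sum_product', ← Finset.filter_product,
          Finset.mul_sum]

lemma sum_comp_le_nsmul_sum {ι κ : Type*} [DecidableEq κ] {s : Finset ι} {t : Finset κ} {e : ι → κ}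
    {c : ℕ} {G : κ → ℝ} (hmaps : ∀ i ∈ s, e i ∈ t) (hcard : ∀ k ∈ t, {i ∈ s | e i = k}.card ≤ c)
    (hG : ∀ k ∈ t, 0 ≤ G k) : ∑ i ∈ s, G (e i) ≤ c • ∑ k ∈ t, G k := by
  rw [← Finset.sum_fiberwise_of_maps_to hmaps, Finset.smul_sum]
  refine Finset.sum_le_sum fun k hk => ?_
  rw [Finset.sum_congr rfl fun i hi => by rw [(Finset.mem_filter.1 hi).2], Finset.sum_const]
  exact nsmul_le_nsmul_left (hG k hk) (hcard k hk)

lemma natAbs_sq_sub_sq (j k : ℕ) :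
    ((j : ℤ) ^ 2 - (k : ℤ) ^ 2).natAbs = ((j : ℤ) - k).natAbs * (j + k) := by
  rw [sq_sub_sq, Int.natAbs_mul, mul_comm]
  norm_cast

/- The pairs `(j, k)` are parametrized by `(|j - k|, j + k)`, two to one. -/
lemma sum_offDiag_dvd_one_div_sqrt_le (N : ℕ) {d : ℕ} (hd : d ≠ 0) :
    ∑ jk ∈ (Finset.Icc 1 N).offDiag with d ∣ ((jk.1 : ℤ) ^ 2 - (jk.2 : ℤ) ^ 2).natAbs,
        1 / √((jk.1 : ℤ) ^ 2 - (jk.2 : ℤ) ^ 2).natAbs ≤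
      16 * N * d.divisors.card / d := by
  let e (jk : ℕ × ℕ) : ℕ × ℕ := (((jk.1 : ℤ) - jk.2).natAbs, jk.1 + jk.2)
  let T : Finset (ℕ × ℕ) := {z ∈ Finset.Icc 1 (2 * N) ×ˢ Finset.Icc 1 (2 * N) | d ∣ z.1 * z.2}
  have hcard (s : Finset (ℕ × ℕ)) (z : ℕ × ℕ) : {jk ∈ s | e jk = z}.card ≤ 2 := by
    refine (Finset.card_le_card fun jk hjk => ?_).trans
      (Finset.card_le_two (a := ((z.2 + z.1) / 2, (z.2 - z.1) / 2))
        (b := ((z.2 - z.1) / 2, (z.2 + z.1) / 2)))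
    obtain ⟨-, rfl⟩ := Finset.mem_filter.1 hjk
    simp only [e, Finset.mem_insert, Finset.mem_singleton, Prod.ext_iff]
    omega
  calc ∑ jk ∈ (Finset.Icc 1 N).offDiag with d ∣ ((jk.1 : ℤ) ^ 2 - (jk.2 : ℤ) ^ 2).natAbs,
          1 / √((jk.1 : ℤ) ^ 2 - (jk.2 : ℤ) ^ 2).natAbs
      = ∑ jk ∈ (Finset.Icc 1 N).offDiag with d ∣ (e jk).1 * (e jk).2,
          1 / √((e jk).1 * (e jk).2 : ℕ) := by simp only [natAbs_sq_sub_sq, e]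
    _ ≤ 2 • ∑ z ∈ T, 1 / √(z.1 * z.2 : ℕ) := by
        refine sum_comp_le_nsmul_sum (e := e) (G := fun z => 1 / √(z.1 * z.2 : ℕ))
          (fun jk hjk => ?_) (fun z _ => hcard _ z) fun _ _ => by positivity
        simp only [e, T, Finset.mem_filter, Finset.mem_offDiag, Finset.mem_product,
          Finset.mem_Icc] at hjk ⊢
        exact ⟨by omega, hjk.2⟩
    _ ≤ 2 • (4 * (2 * N : ℕ) * d.divisors.card / d) := by
        gcongr
        exact sum_filter_dvd_mul_one_div_sqrt_le (2 * N) hd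
    _ = 16 * N * d.divisors.card / d := by
        push_cast
        ring

lemma sum_Icc_one_div_le_one_add_log (n : ℕ) :
    ∑ k ∈ Finset.Icc 1 n, (1 / k : ℝ) ≤ 1 + Real.log n := by
  have h := harmonic_le_one_add_log n
  rw [harmonic_eq_sum_Icc] at h
  simpa only [Rat.cast_sum, Rat.cast_inv, Rat.cast_natCast, one_div] using h

lemma natAbs_sq_sub_sq_le {N j k : ℕ} (hj : j ≤ N) (hk : k ≤ N) :
    ((j : ℤ) ^ 2 - (k : ℤ) ^ 2).natAbs ≤ N ^ 2 := by
  exact_mod_cast Int.natAbs_coe_sub_coe_le_of_le (Nat.pow_le_pow_left hj 2)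
    (Nat.pow_le_pow_left hk 2)

lemma gcdSum_sq_sub_sq_le (N : ℕ) :
    gcdSum (Finset.Icc 1 N).offDiag (fun jk => (jk.1 : ℤ) ^ 2 - (jk.2 : ℤ) ^ 2) ≤
      256 * N ^ 2 * (1 + Real.log (N ^ 2)) ^ 4 := by
  calc gcdSum (Finset.Icc 1 N).offDiag (fun jk => (jk.1 : ℤ) ^ 2 - (jk.2 : ℤ) ^ 2)
      ≤ ∑ d ∈ Finset.Icc 1 (N ^ 2), d * (∑ jk ∈ (Finset.Icc 1 N).offDiag with
            d ∣ ((jk.1 : ℤ) ^ 2 - (jk.2 : ℤ) ^ 2).natAbs,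
          1 / √((jk.1 : ℤ) ^ 2 - (jk.2 : ℤ) ^ 2).natAbs) ^ 2 := by
        refine gcdSum_le_sum_mul_sq (fun jk hjk => ?_) fun jk hjk => ?_
        · rw [sub_ne_zero, Ne, sq_eq_sq₀ (by positivity) (by positivity), Nat.cast_inj]
          exact (Finset.mem_offDiag.1 hjk).2.2
        · have hjk := Finset.mem_offDiag.1 hjk
          exact natAbs_sq_sub_sq_le (Finset.mem_Icc.1 hjk.1).2 (Finset.mem_Icc.1 hjk.2.1).2
    _ ≤ ∑ d ∈ Finset.Icc 1 (N ^ 2), d * (16 * N * d.divisors.card / d : ℝ) ^ 2 := by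
        gcongr with d hd
        exact sum_offDiag_dvd_one_div_sqrt_le N (Nat.ne_of_gt (Finset.mem_Icc.1 hd).1)
    _ = 256 * N ^ 2 * ∑ d ∈ Finset.Icc 1 (N ^ 2), (d.divisors.card ^ 2 / d : ℝ) := by
        rw [Finset.mul_sum]
        refine Finset.sum_congr rfl fun d hd => ?_
        have hd0 : (d : ℝ) ≠ 0 := Nat.cast_ne_zero.2 (Nat.ne_of_gt (Finset.mem_Icc.1 hd).1)
        field_simp
        ring
    _ ≤ 256 * N ^ 2 * (∑ k ∈ Finset.Icc 1 (N ^ 2), (1 / k : ℝ)) ^ 4 := by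
        gcongr
        exact sum_card_divisors_sq_div_le _
    _ ≤ 256 * N ^ 2 * (1 + Real.log (N ^ 2)) ^ 4 := by
        gcongr
        exact_mod_cast sum_Icc_one_div_le_one_add_log (N ^ 2)

lemma one_add_log_pow_le {x ε : ℝ} (hx : 1 ≤ x) (hε : 0 < ε) (n : ℕ) :
    (1 + Real.log x) ^ n ≤ (1 + ε⁻¹) ^ n * x ^ (ε * n) := by
  have hx0 : 0 ≤ x := zero_le_one.trans hx
  rw [Real.rpow_mul_natCast hx0, ← mul_pow]
  have hlog := Real.log_nonneg hx
  gcongr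
  rw [one_add_mul, inv_mul_eq_div]
  exact add_le_add (Real.one_le_rpow hx hε.le) (Real.log_le_rpow_div hx0 hε)

lemma gcdSum_sq_sub_sq_div_le (N : ℕ) :
    gcdSum (Finset.Icc 1 N).offDiag (fun jk => (jk.1 : ℤ) ^ 2 - (jk.2 : ℤ) ^ 2) / N ^ 3 ≤
      256 * 33 ^ 4 * (1 / N ^ (3 / 4 : ℝ)) := by
  rcases N.eq_zero_or_pos with rfl | hN
  · norm_num
  have hN1 : (1 : ℝ) ≤ N := Nat.one_le_cast.2 hN
  have hlog : (1 + Real.log (N ^ 2)) ^ 4 ≤ 33 ^ 4 * (N : ℝ) ^ (1 / 4 : ℝ) := by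
    refine (one_add_log_pow_le (one_le_pow₀ hN1) (ε := 1 / 32) (by norm_num) 4).trans_eq ?_
    rw [← Real.rpow_natCast_mul (Nat.cast_nonneg N)]
    norm_num
  have hsplit : (N : ℝ) ^ (1 / 4 : ℝ) * N ^ (3 / 4 : ℝ) = N := by
    rw [← Real.rpow_add (by positivity)]
    norm_num
  calc gcdSum (Finset.Icc 1 N).offDiag (fun jk => (jk.1 : ℤ) ^ 2 - (jk.2 : ℤ) ^ 2) / N ^ 3
      ≤ 256 * (N : ℝ) ^ 2 * (33 ^ 4 * (N : ℝ) ^ (1 / 4 : ℝ)) / N ^ 3 := by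
        gcongr
        exact (gcdSum_sq_sub_sq_le N).trans (by gcongr)
    _ = 256 * 33 ^ 4 * (1 / (N : ℝ) ^ (3 / 4 : ℝ)) := by
        field_simp
        exact hsplit

lemma summable_gcdSum_sq_sub_sq_div :
    Summable fun k : ℕ =>
      gcdSum (Finset.Icc 1 (k ^ 2)).offDiag (fun jk => (jk.1 : ℤ) ^ 2 - (jk.2 : ℤ) ^ 2) /
        ((k ^ 2 : ℕ) : ℝ) ^ 3 := by
  refine .of_nonneg_of_le (fun k => div_nonneg (gcdSum_nonneg _ _) (by positivity))
    (fun k => gcdSum_sq_sub_sq_div_le (k ^ 2)) (.mul_left _ ?_)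
  simp_rw [Nat.cast_pow, ← Real.rpow_natCast_mul (Nat.cast_nonneg _)]
  exact Real.summable_one_div_nat_rpow.2 (by norm_num)

end GcdSums

section PairCorrelation

/-- The ordered pairs of distinct indices `1 ≤ j, k ≤ N` for which `y j - y k` lies in `[p, q]`
modulo one. -/
def closePairs (y : ℕ → ℝ) (N : ℕ) (p q : ℝ) : Set (ℕ × ℕ) :=
  {jk | 1 ≤ jk.1 ∧ jk.1 ≤ N ∧ 1 ≤ jk.2 ∧ jk.2 ≤ N ∧ jk.1 ≠ jk.2 ∧
    ∃ m : ℤ, p ≤ y jk.1 - y jk.2 + m ∧ y jk.1 - y jk.2 + m ≤ q}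

/-- The pair correlation function `R₂([a, b], y, N)` of the sequence `y` modulo one. -/
noncomputable def pairCorrelation (y : ℕ → ℝ) (a b : ℝ) (N : ℕ) : ℝ :=
  (closePairs y N (a / N) (b / N)).ncard / N

/-- The pair correlation of `y` modulo one is that of independent uniform random points. -/
def HasPoissonianPairCorrelation (y : ℕ → ℝ) : Prop :=
  ∀ a b : ℝ, a < b → Tendsto (pairCorrelation y a b) atTop (𝓝 (b - a))

variable {y : ℕ → ℝ}

lemma closePairs_finite (y : ℕ → ℝ) (N : ℕ) (p q : ℝ) : (closePairs y N p q).Finite :=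
  (Finset.Icc 1 N ×ˢ Finset.Icc 1 N).finite_toSet.subset fun jk hjk => by
    simp only [Finset.coe_product, Set.mem_prod, Finset.mem_coe, Finset.mem_Icc]
    exact ⟨⟨hjk.1, hjk.2.1⟩, hjk.2.2.1, hjk.2.2.2.1⟩

lemma closePairs_subset {M N : ℕ} {p q p' q' : ℝ} (hMN : M ≤ N) (hp : p' ≤ p) (hq : q ≤ q') :
    closePairs y M p q ⊆ closePairs y N p' q' := by
  rintro jk ⟨hj, hjM, hk, hkM, hne, m, hm⟩
  exact ⟨hj, hjM.trans hMN, hk, hkM.trans hMN, hne, m, hp.trans hm.1, hm.2.trans hq⟩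

lemma ncard_closePairs_eq_sum {N : ℕ} {p q : ℝ} (h : q - p < 1) :
    ((closePairs y N p q).ncard : ℝ) =
      ∑ jk ∈ (Finset.Icc 1 N).offDiag, periodizedIcc p q (y jk.1 - y jk.2) := by
  classical
  have hset : closePairs y N p q = ((Finset.Icc 1 N).offDiag.filter fun jk =>
      ∃ m : ℤ, p ≤ y jk.1 - y jk.2 + m ∧ y jk.1 - y jk.2 + m ≤ q : Finset (ℕ × ℕ)) := by
    ext jk
    simp only [closePairs, Set.mem_ofPred_eq, Finset.coe_filter, Finset.mem_offDiag, Finset.mem_Icc,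
      and_assoc]
  simp only [hset, Set.ncard_coe_finset, Finset.natCast_card_filter, periodizedIcc_eq_ite h]

lemma eventually_ncard_closePairs_le {M L : ℕ → ℕ} (hML : ∀ n, M n ≤ L n)
    (hM : Tendsto M atTop atTop) (hratio : Tendsto (fun n => (M n / L n : ℝ)) atTop (𝓝 1))
    {a b a' b' : ℝ} (ha : a < a') (hb : b' < b) :
    ∀ᶠ n in atTop, (closePairs y (M n) (a' / M n) (b' / M n)).ncard ≤
      (closePairs y (L n) (a / L n) (b / L n)).ncard := by
  have ha' : Tendsto (fun n => a * (M n / L n : ℝ)) atTop (𝓝 a) := by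
    simpa only [mul_one] using hratio.const_mul a
  have hb' : Tendsto (fun n => b * (M n / L n : ℝ)) atTop (𝓝 b) := by
    simpa only [mul_one] using hratio.const_mul b
  filter_upwards [hM.eventually_gt_atTop 0, ha'.eventually_lt_const ha, hb'.eventually_const_lt hb]
    with n hn hna hnb
  have hMpos : (0 : ℝ) < M n := Nat.cast_pos.2 hn
  refine Set.ncard_le_ncard (closePairs_subset (hML n) ?_ ?_) (closePairs_finite _ _ _ _)
  · rw [le_div_iff₀ hMpos, div_mul_eq_mul_div, mul_div_assoc]
    exact hna.le
  · rw [div_le_iff₀ hMpos, div_mul_eq_mul_div, mul_div_assoc]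
    exact hnb.le

lemma eventually_lt_pairCorrelation {lo : ℕ → ℕ} (hlo : ∀ n, lo n ≤ n)
    (hratio : Tendsto (fun n => (lo n / n : ℝ)) atTop (𝓝 1)) (hatTop : Tendsto lo atTop atTop)
    {a b a' b' : ℝ} (ha : a < a') (hb : b' < b)
    (hy : Tendsto (fun n => pairCorrelation y a' b' (lo n)) atTop (𝓝 (b' - a'))) {v : ℝ}
    (hv : v < b' - a') : ∀ᶠ N in atTop, v < pairCorrelation y a b N := by
  have hlim := hy.mul hratio
  rw [mul_one] at hlim
  filter_upwards [hlim.eventually_const_lt hv, hatTop.eventually_gt_atTop 0,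
    eventually_ncard_closePairs_le hlo hatTop hratio ha hb] with N hvN hpos hle
  refine hvN.trans_le ?_
  rw [pairCorrelation, pairCorrelation,
    div_mul_div_cancel₀ (Nat.cast_ne_zero.2 (Nat.ne_of_gt hpos))]
  gcongr

lemma eventually_pairCorrelation_lt {up : ℕ → ℕ} (hup : ∀ n, n ≤ up n)
    (hratio : Tendsto (fun n => (up n / n : ℝ)) atTop (𝓝 1))
    {a b a' b' : ℝ} (ha : a' < a) (hb : b < b')
    (hy : Tendsto (fun n => pairCorrelation y a' b' (up n)) atTop (𝓝 (b' - a'))) {v : ℝ}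
    (hv : b' - a' < v) : ∀ᶠ N in atTop, pairCorrelation y a b N < v := by
  have hlim := hy.mul hratio
  have hinv := hratio.inv₀ one_ne_zero
  simp only [inv_div, inv_one] at hinv
  rw [mul_one] at hlim
  filter_upwards [hlim.eventually_lt_const hv, eventually_gt_atTop 0,
    eventually_ncard_closePairs_le hup tendsto_id hinv ha hb] with N hvN hpos hle
  refine lt_of_le_of_lt ?_ hvN
  rw [pairCorrelation, pairCorrelation,
    div_mul_div_cancel₀ (Nat.cast_ne_zero.2 (Nat.ne_of_gt (hpos.trans_le (hup N))))]
  gcongr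

lemma tendsto_sqrt_div_sqrt : Tendsto (fun n : ℕ => (n.sqrt / √n : ℝ)) atTop (𝓝 1) := by
  simpa only [Function.comp_def, Real.nat_floor_real_sqrt_eq_nat_sqrt] using
    (tendsto_nat_floor_div_atTop (R := ℝ)).comp
      (Real.tendsto_sqrt_atTop.comp tendsto_natCast_atTop_atTop)

lemma tendsto_natSqrt_sq_div : Tendsto (fun n : ℕ => ((n.sqrt ^ 2 : ℕ) / n : ℝ)) atTop (𝓝 1) := by
  simpa only [Nat.cast_pow, one_pow, div_pow, Real.sq_sqrt (Nat.cast_nonneg _)] using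
    tendsto_sqrt_div_sqrt.pow 2

lemma tendsto_natSqrt_add_one_sq_div :
    Tendsto (fun n : ℕ => (((n.sqrt + 1) ^ 2 : ℕ) / n : ℝ)) atTop (𝓝 1) := by
  have hone : Tendsto (fun n : ℕ => 1 / √(n : ℝ)) atTop (𝓝 0) :=
    (Real.tendsto_sqrt_atTop.comp tendsto_natCast_atTop_atTop).const_div_atTop 1
  simpa only [Nat.cast_pow, Nat.cast_add, Nat.cast_one, ← add_div, add_zero, one_pow, div_pow,
    Real.sq_sqrt (Nat.cast_nonneg _)] using (tendsto_sqrt_div_sqrt.add hone).pow 2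

lemma tendsto_natSqrt_atTop : Tendsto Nat.sqrt atTop atTop :=
  tendsto_atTop_atTop.2 fun b => ⟨b ^ 2, fun _ hn => Nat.le_sqrt'.2 hn⟩

/- A real interval is approximated by rational ones from inside and from outside, and `N` by
consecutive squares. -/
lemma hasPoissonianPairCorrelation_of_tendsto_sq
    (hy : ∀ a b : ℚ, a < b → Tendsto (fun k => pairCorrelation y a b (k ^ 2)) atTop (𝓝 (b - a))) :
    HasPoissonianPairCorrelation y := by
  intro a b hab
  refine tendsto_order.2 ⟨fun v hv => ?_, fun v hv => ?_⟩
  · obtain ⟨a', haa', ha'⟩ := exists_rat_btwn (lt_min hab (lt_sub_comm.1 hv))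
    have ha'b := ha'.trans_le (min_le_left _ _)
    have hva' := lt_sub_comm.1 (ha'.trans_le (min_le_right _ _))
    obtain ⟨b', hb', hb'b⟩ := exists_rat_btwn (max_lt ha'b (lt_sub_iff_add_lt'.1 hva'))
    exact eventually_lt_pairCorrelation Nat.sqrt_le' tendsto_natSqrt_sq_div
      ((tendsto_pow_atTop two_ne_zero).comp tendsto_natSqrt_atTop) haa' hb'b
      ((hy a' b' (by exact_mod_cast (le_max_left _ _).trans_lt hb')).comp tendsto_natSqrt_atTop)
      (lt_sub_iff_add_lt'.2 ((le_max_right _ _).trans_lt hb'))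
  · obtain ⟨a', ha', ha'a⟩ := exists_rat_btwn (sub_lt_comm.1 hv)
    obtain ⟨b', hbb', hb'⟩ := exists_rat_btwn (sub_lt_iff_lt_add'.1 (sub_lt_comm.1 ha'))
    exact eventually_pairCorrelation_lt (fun n => (Nat.lt_succ_sqrt' n).le)
      tendsto_natSqrt_add_one_sq_div ha'a hbb'
      ((hy a' b' (by exact_mod_cast ha'a.trans (hab.trans hbb'))).comp
        ((tendsto_add_atTop_nat 1).comp tendsto_natSqrt_atTop))
      (sub_lt_iff_lt_add'.2 hb')

end PairCorrelation

section MetricTheory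

variable {x : ℕ → ℤ} {a b : ℝ}

/-- The pair correlation of `n ↦ x n * α` modulo one in which each pair `(j, k)` is counted once for
every integer `m` with `x j * α - x k * α + m ∈ [a / N, b / N]`. -/
noncomputable def pairCorrelationWithMultiplicity (x : ℕ → ℤ) (a b : ℝ) (N : ℕ) (α : ℝ) : ℝ :=
  (∑ jk ∈ (Finset.Icc 1 N).offDiag,
    periodizedIcc (a / N) (b / N) ((x jk.1 - x jk.2 : ℤ) * α)) / N

lemma pairCorrelationWithMultiplicity_eq {N : ℕ} (hN : b - a < N) (hab : a ≤ b) (α : ℝ) :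
    pairCorrelationWithMultiplicity x a b N α = pairCorrelation (fun n => x n * α) a b N := by
  have hlt : b / N - a / N < 1 := by
    rw [← sub_div]
    exact (div_lt_one ((sub_nonneg.2 hab).trans_lt hN)).2 hN
  simp only [pairCorrelationWithMultiplicity, pairCorrelation, ncard_closePairs_eq_sum hlt,
    Int.cast_sub, sub_mul]

lemma pairCorrelationWithMultiplicity_periodic (hab : a ≤ b) (N : ℕ) :
    Function.Periodic (pairCorrelationWithMultiplicity x a b N) 1 := by
  have hper : Function.Periodic (periodizedIcc (a / N) (b / N)) 1 :=
    periodizedIcc_periodic (div_le_div_of_nonneg_right hab (Nat.cast_nonneg N))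
  intro α
  rw [pairCorrelationWithMultiplicity, pairCorrelationWithMultiplicity]
  simp only [mul_add, hper.int_mul _ _]

lemma memLp_pairCorrelationWithMultiplicity (hab : a ≤ b) (N : ℕ) :
    MemLp (pairCorrelationWithMultiplicity x a b N) 2 uniformUnitIoc :=
  (memLp_finsetSum _ fun _ _ => memLp_periodizedIcc_int_mul
    (div_le_div_of_nonneg_right hab (Nat.cast_nonneg N)) _).mul_const (N : ℝ)⁻¹

lemma sub_ne_zero_of_mem_offDiag (hx : x.Injective) {s : Finset ℕ} :
    ∀ jk ∈ s.offDiag, x jk.1 - x jk.2 ≠ 0 := fun _ hjk =>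
  sub_ne_zero.2 (hx.ne (Finset.mem_offDiag.1 hjk).2.2)

lemma integral_pairCorrelationWithMultiplicity (hx : x.Injective) (hab : a ≤ b) {N : ℕ}
    (hN : N ≠ 0) :
    ∫ α, pairCorrelationWithMultiplicity x a b N α ∂uniformUnitIoc =
      (b - a) * (1 - (N : ℝ)⁻¹) := by
  have hcard : ((Finset.Icc 1 N).offDiag.card : ℝ) = N * N - N := by
    rw [Finset.offDiag_card, Nat.card_Icc, Nat.add_sub_cancel, Nat.cast_sub (Nat.le_mul_self N),
      Nat.cast_mul]
  simp only [pairCorrelationWithMultiplicity]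
  rw [integral_div, integral_sum_periodizedIcc (sub_ne_zero_of_mem_offDiag hx)
    (div_le_div_of_nonneg_right hab (Nat.cast_nonneg N)), hcard]
  field_simp

lemma variance_pairCorrelationWithMultiplicity_le (hx : x.Injective) (hab : a ≤ b) (N : ℕ) :
    Var[pairCorrelationWithMultiplicity x a b N; uniformUnitIoc] ≤
      (b - a) * (gcdSum (Finset.Icc 1 N).offDiag (fun jk => x jk.1 - x jk.2) / N ^ 3) := by
  have hle : a / N ≤ b / N := div_le_div_of_nonneg_right hab (Nat.cast_nonneg N)
  calc Var[pairCorrelationWithMultiplicity x a b N; uniformUnitIoc]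
      = Var[fun α => ∑ jk ∈ (Finset.Icc 1 N).offDiag,
          periodizedIcc (a / N) (b / N) ((x jk.1 - x jk.2 : ℤ) * α); uniformUnitIoc] *
            (N : ℝ)⁻¹ ^ 2 := variance_mul_const _ _ _
    _ ≤ (b / N - a / N) * gcdSum (Finset.Icc 1 N).offDiag (fun jk => x jk.1 - x jk.2) *
          (N : ℝ)⁻¹ ^ 2 := by
        gcongr
        exact variance_sum_periodizedIcc_le (sub_ne_zero_of_mem_offDiag hx) hle
    _ = (b - a) * (gcdSum (Finset.Icc 1 N).offDiag (fun jk => x jk.1 - x jk.2) / N ^ 3) := by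
        ring

lemma ae_tendsto_pairCorrelation_of_summable_gcdSum (hx : x.Injective) {ν : ℕ → ℕ}
    (hν : Tendsto ν atTop atTop)
    (hsum : Summable fun k =>
      gcdSum (Finset.Icc 1 (ν k)).offDiag (fun jk => x jk.1 - x jk.2) / (ν k : ℝ) ^ 3)
    (hab : a ≤ b) :
    ∀ᵐ α, Tendsto (fun k => pairCorrelation (fun n => x n * α) a b (ν k)) atTop (𝓝 (b - a)) := by
  have hvar : Summable fun k =>
      Var[pairCorrelationWithMultiplicity x a b (ν k); uniformUnitIoc] :=
    .of_nonneg_of_le (fun _ => variance_nonneg _ _)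
      (fun k => variance_pairCorrelationWithMultiplicity_le hx hab (ν k)) (hsum.mul_left (b - a))
  have hmean : Tendsto
      (fun k => ∫ α, pairCorrelationWithMultiplicity x a b (ν k) α ∂uniformUnitIoc) atTop
      (𝓝 (b - a)) := by
    have hlim : Tendsto (fun k => (b - a) * (1 - (ν k : ℝ)⁻¹)) atTop (𝓝 ((b - a) * (1 - 0))) :=
      ((tendsto_inv_atTop_nhds_zero_nat.comp hν).const_sub 1).const_mul (b - a)
    rw [sub_zero, mul_one] at hlim
    refine hlim.congr' ?_
    filter_upwards [hν.eventually_ne_atTop 0] with k hk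
    exact (integral_pairCorrelationWithMultiplicity hx hab hk).symm
  have hae : ∀ᵐ α, Tendsto (fun k => pairCorrelationWithMultiplicity x a b (ν k) α) atTop
      (𝓝 (b - a)) := by
    refine ae_volume_of_ae_uniformUnitIoc (fun α => ?_) ?_
    · simp only [pairCorrelationWithMultiplicity_periodic hab _ α]
    · filter_upwards [ae_tendsto_sub_integral_of_summable_variance
        (fun k => memLp_pairCorrelationWithMultiplicity hab (ν k)) hvar] with α hα
      simpa only [sub_add_cancel, zero_add] using hα.add hmean
  filter_upwards [hae] with α hα
  refine hα.congr' ?_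
  filter_upwards [(tendsto_natCast_atTop_atTop.comp hν).eventually_gt_atTop (b - a)] with k hk
  exact pairCorrelationWithMultiplicity_eq hk hab α

theorem ae_hasPoissonianPairCorrelation_of_summable_gcdSum (hx : x.Injective)
    (hsum : Summable fun k : ℕ =>
      gcdSum (Finset.Icc 1 (k ^ 2)).offDiag (fun jk => x jk.1 - x jk.2) / ((k ^ 2 : ℕ) : ℝ) ^ 3) :
    ∀ᵐ α, HasPoissonianPairCorrelation fun n => x n * α := by
  have hrat : ∀ᵐ α : ℝ, ∀ a b : ℚ, a < b →
      Tendsto (fun k => pairCorrelation (fun n => x n * α) a b (k ^ 2)) atTop (𝓝 (b - a)) := by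
    refine ae_all_iff.2 fun a => ae_all_iff.2 fun b => eventually_imp_distrib_left.2 fun hab => ?_
    exact ae_tendsto_pairCorrelation_of_summable_gcdSum hx
      (tendsto_pow_atTop two_ne_zero) hsum (Rat.cast_le.2 hab.le)
  filter_upwards [hrat] with α hα
  exact hasPoissonianPairCorrelation_of_tendsto_sq hα

end MetricTheory

/-- For almost every `α` the pair correlation of `n²α` mod one is Poissonian:
for all `a < b`,
`(1/N) · #{(j,k) : 1 ≤ j,k ≤ N, j ≠ k, j²α − k²α ∈ [a/N, b/N] + ℤ} → b − a` as `N → ∞`. -/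
theorem stmt_4 :
    ∀ᵐ α ∂(volume : Measure ℝ), ∀ a b : ℝ, a < b →
      Filter.Tendsto
        (fun N : ℕ =>
          ((Set.ncard {jk : ℕ × ℕ | 1 ≤ jk.1 ∧ jk.1 ≤ N ∧ 1 ≤ jk.2 ∧ jk.2 ≤ N ∧ jk.1 ≠ jk.2 ∧
              ∃ m : ℤ, a / (N : ℝ) ≤ (jk.1 : ℝ) ^ 2 * α - (jk.2 : ℝ) ^ 2 * α + (m : ℝ) ∧
                (jk.1 : ℝ) ^ 2 * α - (jk.2 : ℝ) ^ 2 * α + (m : ℝ) ≤ b / (N : ℝ)} : ℝ)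
            / (N : ℝ)))
        Filter.atTop (nhds (b - a)) := by
  have hinj : Function.Injective fun n : ℕ => (n : ℤ) ^ 2 := fun m n hmn => by
    simpa using hmn
  filter_upwards [ae_hasPoissonianPairCorrelation_of_summable_gcdSum hinj
    summable_gcdSum_sq_sub_sq_div] with α hα a b hab
  refine (hα a b hab).congr fun N => ?_
  simp only [pairCorrelation, closePairs, Int.cast_pow, Int.cast_natCast]
end

section
/- Let α ∈ ℝ, p ∈ ℤ, and let q, m be positive integers; set d = gcd(q, |m·p|) (with d = q when p = 0). Then for every y > 0 there exists γ ∈ SL(2,ℤ) such that Im(γ·(mα + iy)) ≥ d²·y / (q²y² + m²(p − qα)²). -/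
open scoped MatrixGroups UpperHalfPlane

/-!
The bottom row `(-q/d, mp/d)` is coprime, hence completes to some `γ ∈ SL(2, ℤ)`. At `z = mα + iy`
its linear form is `1/d` times `-qz + mp = m(p - qα) - iqy`, so `γ` attains equality.
-/

theorem normSq_ofReal_mul_add_ofReal (c d : ℝ) (z : ℂ) :
    Complex.normSq (c * z + d) = (c * z.re + d) ^ 2 + (c * z.im) ^ 2 := by
  simp [Complex.normSq_apply, sq]

theorem exists_im_smul_eq_im_div_normSq {c d : ℤ} (hcd : IsCoprime c d) (z : ℍ) :
    ∃ γ : SL(2, ℤ), (γ • z).im = z.im / Complex.normSq (c * z + d) := by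
  obtain ⟨γ, hγc, hγd⟩ := hcd.exists_SL2_row 1
  exact ⟨γ, by rw [ModularGroup.im_smul_eq_div_normSq, ModularGroup.denom_apply, hγc, hγd]⟩

theorem exists_im_smul_eq_gcd_sq_mul_im_div_normSq {c d : ℤ} (hcd : c ≠ 0 ∨ d ≠ 0) (z : ℍ) :
    ∃ γ : SL(2, ℤ),
      (γ • z).im = (c.gcd d : ℝ) ^ 2 * z.im / Complex.normSq (c * z + d) := by
  have hgcd_pos : 0 < c.gcd d := Int.gcd_pos_iff.mpr hcd
  obtain ⟨c', d', hcoprime, hc, hd⟩ := Int.exists_gcd_one hgcd_pos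
  obtain ⟨γ, hγ⟩ :=
    exists_im_smul_eq_im_div_normSq (Int.isCoprime_iff_gcd_eq_one.mpr hcoprime) z
  set g := c.gcd d
  have hg_sq : (g : ℝ) ^ 2 ≠ 0 := by positivity
  have hfactor : (c * z + d : ℂ) = g * (c' * z + d') := by
    rw [hc, hd]
    push_cast
    ring
  refine ⟨γ, ?_⟩
  rw [hγ, hfactor, Complex.normSq_mul, Complex.normSq_natCast, ← sq, mul_div_mul_left _ _ hg_sq]

/-- For `α ∈ ℝ`, `p ∈ ℤ`, positive integers `q, m` and `d = gcd(q, |mp|)`,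
for every `y > 0` there is `γ ∈ SL(2,ℤ)` with
`Im(γ·(mα + iy)) ≥ d²y / (q²y² + m²(p − qα)²)`. -/
theorem stmt_11 (α : ℝ) (p : ℤ) (q m : ℕ) (hq : 0 < q) (hm : 0 < m)
    (y : ℝ) (hy : 0 < y) :
    ∃ γ : SL(2, ℤ),
      ((Nat.gcd q (m * p.natAbs) : ℝ)) ^ 2 * y /
          ((q : ℝ) ^ 2 * y ^ 2 + (m : ℝ) ^ 2 * ((p : ℝ) - (q : ℝ) * α) ^ 2)
        ≤ (γ • UpperHalfPlane.mk ⟨(m : ℝ) * α, y⟩ hy).im := by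
  have hgcd : Int.gcd (-q) (m * p) = Nat.gcd q (m * p.natAbs) := by
    rw [Int.gcd_def, Int.natAbs_neg, Int.natAbs_mul, Int.natAbs_natCast, Int.natAbs_natCast]
  have hnormSq : Complex.normSq ((-q : ℤ) * ⟨m * α, y⟩ + (m * p : ℤ)) =
      (q : ℝ) ^ 2 * y ^ 2 + (m : ℝ) ^ 2 * ((p : ℝ) - q * α) ^ 2 := by
    rw [← Complex.ofReal_intCast, ← Complex.ofReal_intCast, normSq_ofReal_mul_add_ofReal]
    push_cast
    ring
  have hrow : (-q : ℤ) ≠ 0 ∨ (m * p : ℤ) ≠ 0 := .inl (by lia)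
  obtain ⟨γ, hγ⟩ := exists_im_smul_eq_gcd_sq_mul_im_div_normSq hrow (.mk ⟨m * α, y⟩ hy)
  refine ⟨γ, le_of_eq ?_⟩
  rw [hγ, hgcd, UpperHalfPlane.coe_mk, hnormSq, UpperHalfPlane.mk_im]
end

section
/- Let ν > 0 and let α ∈ ℝ, p ∈ ℤ and q a positive integer satisfy |α − p/q| ≤ (3q)^{−2−2/ν}. Then for every integer M with 4^{1/ν}·q^{2/ν} ≤ M ≤ 4^{−1/(2+ν)}·3^{4(1+ν)/(ν(2+ν))}·q^{2/ν}, and every integer m with 1 ≤ m ≤ M, there exists γ ∈ SL(2,ℤ) such that Im(γ·(mα + i·M^{−ν})) ≥ 2; equivalently, 𝒴(mα + i·M^{−ν}) ≥ 2 for all m ∈ {1, …, M}. -/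
open scoped MatrixGroups UpperHalfPlane

/-- `Im(γ·(x+iy))` for a point of the upper half-plane (zero if `y ≤ 0`). -/
noncomputable def imGammaPt (γ : SL(2, ℤ)) (x y : ℝ) : ℝ :=
  if h : 0 < y then (γ • UpperHalfPlane.mk ⟨x, y⟩ h).im else 0

/-- The invariant height `𝒴(x+iy) = sup_{γ ∈ SL(2,ℤ)} Im(γ·(x+iy))` (zero if `y ≤ 0`). -/
noncomputable def invHeightPt (x y : ℝ) : ℝ :=
  if h : 0 < y then ⨆ γ : SL(2, ℤ), (γ • UpperHalfPlane.mk ⟨x, y⟩ h).im else 0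

/-!
For every nonzero integer vector `(a, b)`, the invariant height of `z` is at least
`Im z / |a z + b|²`: for a primitive vector this is the imaginary part of `γ • z` with bottom row
`(a, b)`, and dividing out a common factor only increases the quotient.

Apply this to `z = mα + iM^{-ν}` and `(a, b) = (q, -mp)`. The real part of `q z - mp` is
`q m (α - p/q)`, which is small by the approximation hypothesis and the upper bound on `M`; its
imaginary part is `q M^{-ν}`, which is small by the lower bound on `M`. The two bounds on `M` are
what makes the square of each part at most `M^{-ν} / (2T)`, where `T` is the height to be reached.
-/

lemma exists_im_div_normSq_le_im_smul (z : ℍ) {a b : ℤ} (hab : a ≠ 0 ∨ b ≠ 0) :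
    ∃ γ : SL(2, ℤ), z.im / Complex.normSq (a * z + b) ≤ (γ • z).im := by
  obtain ⟨g, c, d, hg, hcd, rfl, rfl⟩ := Int.exists_gcd_one' (Int.gcd_pos_iff.2 hab)
  obtain ⟨γ, -, hγ⟩ :=
    ModularGroup.bottom_row_surj (a := ![c, d]) (Int.isCoprime_iff_gcd_eq_one.2 hcd)
  have hc : γ 1 0 = c := congrFun hγ 0
  have hd : γ 1 1 = d := congrFun hγ 1
  have hfactor : ((c * g : ℤ) * z + (d * g : ℤ) : ℂ) = g * (c * z + d) := by push_cast; ring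
  have hg_sq : (1 : ℝ) ≤ g ^ 2 := one_le_pow₀ (by exact_mod_cast hg)
  refine ⟨γ, ?_⟩
  rw [ModularGroup.im_smul_eq_div_normSq, ModularGroup.denom_apply, hc, hd, hfactor, map_mul,
    Complex.normSq_natCast, ← sq, mul_comm, ← div_div]
  exact div_le_self (div_nonneg z.im_pos.le (Complex.normSq_nonneg _)) hg_sq

lemma exists_le_imGammaPt {x y T : ℝ} {a b : ℤ} (hy : 0 < y) (hab : a ≠ 0 ∨ b ≠ 0)
    (h : T * ((a * x + b) ^ 2 + (a * y) ^ 2) ≤ y) : ∃ γ : SL(2, ℤ), T ≤ imGammaPt γ x y := by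
  obtain ⟨γ, hγ⟩ := exists_im_div_normSq_le_im_smul (.mk ⟨x, y⟩ hy) hab
  have hnormSq : Complex.normSq (a * (⟨x, y⟩ : ℂ) + b) = (a * x + b) ^ 2 + (a * y) ^ 2 := by
    simp [Complex.normSq_apply, sq]
  have hpos : 0 < (a * x + b) ^ 2 + (a * y) ^ 2 := by
    rcases eq_or_ne a 0 with rfl | ha
    · have hb : (b : ℝ) ≠ 0 := by exact_mod_cast hab.resolve_left (by simp)
      simpa using sq_pos_of_ne_zero hb
    · positivity
  refine ⟨γ, ?_⟩
  rw [imGammaPt, dif_pos hy]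
  refine ((le_div_iff₀ hpos).2 h).trans ?_
  rw [← hnormSq]
  exact hγ

lemma bddAbove_range_im_smul (z : ℍ) : BddAbove (Set.range fun γ : SL(2, ℤ) ↦ (γ • z).im) :=
  let ⟨γ, hγ⟩ := ModularGroup.exists_max_im z
  ⟨(γ • z).im, Set.forall_mem_range.2 hγ⟩

lemma imGammaPt_le_invHeightPt (γ : SL(2, ℤ)) (x y : ℝ) : imGammaPt γ x y ≤ invHeightPt x y := by
  unfold imGammaPt invHeightPt
  split_ifs with hy
  · exact le_ciSup (bddAbove_range_im_smul _) γ
  · exact le_rfl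

section SizeBounds

variable {ν C K q M : ℝ}

lemma mul_sq_le_rpow (hν : 0 < ν) (hC : 0 ≤ C) (hq : 0 ≤ q)
    (hM : C ^ (1 / ν) * q ^ (2 / ν) ≤ M) : C * q ^ 2 ≤ M ^ ν := by
  calc C * q ^ 2 = (C ^ (1 / ν) * q ^ (2 / ν)) ^ ν := by
        rw [Real.mul_rpow (by positivity) (by positivity), ← Real.rpow_mul hC, ← Real.rpow_mul hq,
          div_mul_cancel₀ _ hν.ne', div_mul_cancel₀ _ hν.ne', Real.rpow_one, Real.rpow_two]
    _ ≤ M ^ ν := by gcongr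

lemma sq_mul_rpow_neg_le (hν : 0 < ν) (hC : 0 < C) (hq : 0 ≤ q) (hM₀ : 0 < M)
    (hM : C ^ (1 / ν) * q ^ (2 / ν) ≤ M) : (q * M ^ (-ν)) ^ 2 ≤ M ^ (-ν) / C := by
  have hq_sq : q ^ 2 ≤ M ^ ν / C := by
    rw [le_div_iff₀' hC]
    exact mul_sq_le_rpow hν hC.le hq hM
  calc (q * M ^ (-ν)) ^ 2 = q ^ 2 * (M ^ (-ν)) ^ 2 := mul_pow ..
    _ ≤ M ^ ν / C * (M ^ (-ν)) ^ 2 := by gcongr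
    _ = M ^ (-ν) / C := by rw [Real.rpow_neg hM₀.le]; field_simp

lemma rpow_two_add_le (hν : 0 < ν) (hC : 0 ≤ C) (hK : 0 ≤ K) (hq : 0 ≤ q) (hM₀ : 0 ≤ M)
    (hM : M ≤ C ^ (-(1 / (2 + ν))) * K ^ (4 * (1 + ν) / (ν * (2 + ν))) * q ^ (2 / ν)) :
    M ^ (2 + ν) ≤ C⁻¹ * K ^ (4 + 4 / ν) * q ^ (2 + 4 / ν) := by
  have hC_exp : -(1 / (2 + ν)) * (2 + ν) = -1 := by field_simp
  have hK_exp : 4 * (1 + ν) / (ν * (2 + ν)) * (2 + ν) = 4 + 4 / ν := by field_simp; ring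
  have hq_exp : 2 / ν * (2 + ν) = 2 + 4 / ν := by field_simp; ring
  calc M ^ (2 + ν)
      ≤ (C ^ (-(1 / (2 + ν))) * K ^ (4 * (1 + ν) / (ν * (2 + ν))) * q ^ (2 / ν)) ^ (2 + ν) := by
        gcongr
    _ = C⁻¹ * K ^ (4 + 4 / ν) * q ^ (2 + 4 / ν) := by
        rw [Real.mul_rpow (by positivity) (by positivity),
          Real.mul_rpow (by positivity) (by positivity), ← Real.rpow_mul hC, ← Real.rpow_mul hK,
          ← Real.rpow_mul hq, hC_exp, hK_exp, hq_exp, Real.rpow_neg_one]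

lemma sq_mul_rpow_neg_two_add_eq (hK : 0 ≤ K) (hq : 0 < q) :
    (q * (K * q) ^ (-(2 + 2 / ν))) ^ 2 = (K ^ (4 + 4 / ν) * q ^ (2 + 4 / ν))⁻¹ := by
  have hpow : ((K * q) ^ (-(2 + 2 / ν))) ^ 2 = (K * q) ^ (-(4 + 4 / ν)) := by
    rw [← Real.rpow_mul_natCast (by positivity)]
    congr 1
    push_cast
    ring
  have hsplit : q ^ (4 + 4 / ν) = q ^ (2 + 4 / ν) * q ^ 2 := by
    rw [← Real.rpow_two, ← Real.rpow_add hq]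
    congr 1
    ring
  rw [mul_pow, hpow, Real.rpow_neg (by positivity), Real.mul_rpow hK hq.le, hsplit]
  field_simp

lemma sq_mul_mul_rpow_neg_two_add_le (hν : 0 < ν) (hC : 0 ≤ C) (hK : 0 < K) (hq : 0 < q)
    (hM₀ : 0 < M)
    (hM : M ≤ C ^ (-(1 / (2 + ν))) * K ^ (4 * (1 + ν) / (ν * (2 + ν))) * q ^ (2 / ν)) :
    (q * (M * (K * q) ^ (-(2 + 2 / ν)))) ^ 2 ≤ M ^ (-ν) / C := by
  have hM_sq : M ^ 2 = M ^ (2 + ν) * M ^ (-ν) := by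
    rw [← Real.rpow_add hM₀, add_neg_cancel_right, Real.rpow_two]
  calc (q * (M * (K * q) ^ (-(2 + 2 / ν)))) ^ 2
      = M ^ (2 + ν) * M ^ (-ν) * (K ^ (4 + 4 / ν) * q ^ (2 + 4 / ν))⁻¹ := by
        rw [mul_left_comm, mul_pow, hM_sq, sq_mul_rpow_neg_two_add_eq hK.le hq]
    _ ≤ C⁻¹ * K ^ (4 + 4 / ν) * q ^ (2 + 4 / ν) * M ^ (-ν) *
          (K ^ (4 + 4 / ν) * q ^ (2 + 4 / ν))⁻¹ := by
        gcongr
        exact rpow_two_add_le hν hC hK.le hq.le hM₀.le hM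
    _ = M ^ (-ν) / C := by field_simp

end SizeBounds

lemma sq_mul_sub_le_of_abs_sub_div_le {α p q m M δ : ℝ} (hq : 0 < q) (hα : |α - p / q| ≤ δ)
    (hm : |m| ≤ M) : (q * (m * α) - m * p) ^ 2 ≤ (q * (M * δ)) ^ 2 := by
  have hM : 0 ≤ M := (abs_nonneg m).trans hm
  have hfactor : q * (m * α) - m * p = q * (m * (α - p / q)) := by field_simp
  rw [hfactor, ← sq_abs, abs_mul, abs_mul, abs_of_pos hq]
  gcongr

theorem stmt_12_general {ν T K α M : ℝ} (hν : 0 < ν) (hT : 0 < T) (hK : 0 < K) {p : ℤ} {q : ℕ}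
    (hq : 0 < q) (hα : |α - p / q| ≤ (K * q) ^ (-(2 + 2 / ν)))
    (hM_ge : (2 * T) ^ (1 / ν) * (q : ℝ) ^ (2 / ν) ≤ M)
    (hM_le : M ≤ (2 * T) ^ (-(1 / (2 + ν))) * K ^ (4 * (1 + ν) / (ν * (2 + ν))) *
      (q : ℝ) ^ (2 / ν))
    {m : ℤ} (hm : |(m : ℝ)| ≤ M) :
    (∃ γ : SL(2, ℤ), T ≤ imGammaPt γ (m * α) (M ^ (-ν))) ∧
      T ≤ invHeightPt (m * α) (M ^ (-ν)) := by
  have hq₀ : (0 : ℝ) < q := by exact_mod_cast hq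
  have hM₀ : 0 < M := lt_of_lt_of_le (by positivity) hM_ge
  have hre : (q * (m * α) - m * p) ^ 2 ≤ M ^ (-ν) / (2 * T) :=
    (sq_mul_sub_le_of_abs_sub_div_le hq₀ hα hm).trans
      (sq_mul_mul_rpow_neg_two_add_le hν (by positivity) hK hq₀ hM₀ hM_le)
  have him : (q * M ^ (-ν)) ^ 2 ≤ M ^ (-ν) / (2 * T) :=
    sq_mul_rpow_neg_le hν (by positivity) hq₀.le hM₀ hM_ge
  have hbound : T * ((q * (m * α) - m * p) ^ 2 + (q * M ^ (-ν)) ^ 2) ≤ M ^ (-ν) :=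
    calc T * ((q * (m * α) - m * p) ^ 2 + (q * M ^ (-ν)) ^ 2)
        ≤ T * (M ^ (-ν) / (2 * T) + M ^ (-ν) / (2 * T)) := by gcongr
      _ = M ^ (-ν) := by field_simp; ring
  obtain ⟨γ, hγ⟩ : ∃ γ : SL(2, ℤ), T ≤ imGammaPt γ (m * α) (M ^ (-ν)) :=
    exists_le_imGammaPt (a := q) (b := -(m * p)) (by positivity)
      (.inl (by exact_mod_cast hq.ne')) (by push_cast; exact hbound)
  exact ⟨⟨γ, hγ⟩, hγ.trans (imGammaPt_le_invHeightPt γ _ _)⟩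

/-- If `|α − p/q| ≤ (3q)^{−2−2/ν}` then for every integer `M` with
`4^{1/ν}q^{2/ν} ≤ M ≤ 4^{−1/(2+ν)}·3^{4(1+ν)/(ν(2+ν))}·q^{2/ν}` and every `1 ≤ m ≤ M`,
there is `γ ∈ SL(2,ℤ)` with `Im(γ·(mα + iM^{−ν})) ≥ 2`; equivalently
`𝒴(mα + iM^{−ν}) ≥ 2`. -/
theorem stmt_12 (ν : ℝ) (hν : 0 < ν) (α : ℝ) (p : ℤ) (q : ℕ) (hq : 0 < q)
    (happ : |α - (p : ℝ) / (q : ℝ)| ≤ (3 * (q : ℝ)) ^ (-(2 + 2 / ν)))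
    (M : ℕ) (hM1 : (4 : ℝ) ^ (1 / ν) * (q : ℝ) ^ (2 / ν) ≤ (M : ℝ))
    (hM2 : (M : ℝ) ≤ (4 : ℝ) ^ (-(1 / (2 + ν))) * (3 : ℝ) ^ (4 * (1 + ν) / (ν * (2 + ν))) *
      (q : ℝ) ^ (2 / ν))
    (m : ℕ) (hm1 : 1 ≤ m) (hmM : m ≤ M) :
    (∃ γ : SL(2, ℤ), 2 ≤ imGammaPt γ ((m : ℝ) * α) ((M : ℝ) ^ (-ν))) ∧
      2 ≤ invHeightPt ((m : ℝ) * α) ((M : ℝ) ^ (-ν)) := by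
  have h4 : (4 : ℝ) = 2 * 2 := by norm_num
  exact stmt_12_general (m := m) hν two_pos three_pos hq happ (h4 ▸ hM1) (h4 ▸ hM2) (by simpa)
end

section
/- Let ψ : ℝ → ℝ be a smooth, even, compactly supported function, and let g : ℝ → ℂ be continuous with |g(x)| ≤ C(1+x²)^{−1} for some C > 0, such that its Fourier transform ĝ(u) = ∫_ℝ g(x) e(−ux) dx is continuous and compactly supported. Define θ_ψ(x + iy) = y^{1/4} ∑_{j ∈ ℤ} ψ(j·y^{1/2}) e(j²x) for x ∈ ℝ, y > 0. Then for every α ∈ ℝ and every positive integer N: (1/N) ∑_{j ∈ ℤ} ∑_{k ∈ ℤ} ψ(j/N) ψ(k/N) ∑_{m ∈ ℤ} g(N·((j² − k²)α + m)) = (1/N) ∑_{m ∈ ℤ} ĝ(m/N) · |θ_ψ(mα + i·N^{−2})|². -/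
open MeasureTheory

/-- The Fourier transform `ĝ(u) = ∫_ℝ g(x) e(−ux) dx`. -/
noncomputable def fhat (g : ℝ → ℂ) (u : ℝ) : ℂ :=
  ∫ x : ℝ, g x * Complex.exp (-(2 * (Real.pi : ℂ) * Complex.I * (u : ℂ) * (x : ℂ)))

/-- The cutoff theta sum `θ_ψ(x+iy) = y^{1/4} ∑_{j ∈ ℤ} ψ(j·y^{1/2}) e(j²x)`. -/
noncomputable def thetaSum (ψ : ℝ → ℝ) (x y : ℝ) : ℂ :=
  ((y ^ ((1 : ℝ) / 4) : ℝ) : ℂ) *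
    ∑' j : ℤ, ((ψ ((j : ℝ) * Real.sqrt y) : ℝ) : ℂ) *
      Complex.exp (2 * (Real.pi : ℂ) * Complex.I * ((j : ℂ)) ^ 2 * (x : ℂ))

/-!
Poisson summation expands the periodization of `x ↦ g (N x)` as an absolutely convergent Fourier
series with coefficients `ĝ(m/N) / N`. Evaluated at the differences `(j² - k²) α` and summed against
the weights `ψ(j/N) ψ(k/N)`, the term of frequency `m` separates into a Weyl sum over `j` times its
complex conjugate, and `θ_ψ(mα + iN⁻²)` is `N^(-1/2)` times this Weyl sum.
-/

section Summability

open Asymptotics Filter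

theorem summable_comp_of_hasCompactSupport {ι X E : Type*} [TopologicalSpace X] [R1Space X]
    [AddCommGroup E] [TopologicalSpace E] {f : X → E} (hf : HasCompactSupport f) {x : ι → X}
    (hx : Tendsto x cofinite (cocompact X)) : Summable fun i => f (x i) := by
  rw [hasCompactSupport_iff_eventuallyEq, coclosedCompact_eq_cocompact] at hf
  exact summable_of_hasFiniteSupport (hx.eventually hf)

theorem tendsto_intCast_div_cofinite_cocompact {N : ℝ} (hN : N ≠ 0) :
    Tendsto (fun m : ℤ => (m : ℝ) / N) cofinite (cocompact ℝ) :=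
  ((Homeomorph.mulRight₀ N⁻¹ (inv_ne_zero hN)).isClosedEmbedding.tendsto_cocompact.comp
    Int.tendsto_coe_cofinite).congr fun _ => (div_eq_mul_inv _ _).symm

theorem summable_comp_intCast_div {E : Type*} [AddCommGroup E] [TopologicalSpace E] {f : ℝ → E}
    (hf : HasCompactSupport f) {N : ℝ} (hN : N ≠ 0) : Summable fun m : ℤ => f (m / N) :=
  summable_comp_of_hasCompactSupport hf (tendsto_intCast_div_cofinite_cocompact hN)

theorem isBigO_cocompact_rpow_neg_two {E : Type*} [Norm E] {g : ℝ → E} {C : ℝ}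
    (hg : ∀ x, ‖g x‖ ≤ C * (1 + x ^ 2)⁻¹) :
    g =O[cocompact ℝ] fun x => |x| ^ (-2 : ℝ) := by
  have hinv : (fun x : ℝ => (1 + x ^ 2)⁻¹) =O[cocompact ℝ] fun x => |x| ^ (-2 : ℝ) := by
    refine .of_bound 1 ?_
    filter_upwards [isCompact_singleton.compl_mem_cocompact] with x (hx : x ≠ 0)
    rw [one_mul, Real.norm_of_nonneg (by positivity), Real.norm_of_nonneg (by positivity),
      Real.rpow_neg (abs_nonneg x), Real.rpow_two, sq_abs]
    exact inv_anti₀ (by positivity) (by linarith)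
  exact (IsBigO.of_norm_le hg).trans (hinv.const_mul_left C)

end Summability

section WeylSum

open scoped ComplexConjugate FourierTransform

variable {ι κ : Type*} {a : ι → ℂ} {c : κ → ℂ}

/-- The Weyl sum `∑ⱼ aⱼ e(t xⱼ)` of the points `xⱼ` with weights `aⱼ` at the frequency `t`. -/
noncomputable def weylSum (a : ι → ℂ) (x : ι → ℝ) (t : ℝ) : ℂ :=
  ∑' j, a j * (𝐞 (t * x j) : ℂ)

theorem fourierChar_sub_eq_mul_conj (x y : ℝ) :
    (𝐞 (x - y) : ℂ) = 𝐞 x * conj (𝐞 y : ℂ) := by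
  rw [AddChar.map_sub_eq_div, div_eq_mul_inv, Circle.coe_mul, Circle.coe_inv_eq_conj]

theorem norm_weylSum_sq (ha : Summable a) (x : ι → ℝ) (t : ℝ) :
    ((‖weylSum a x t‖ ^ 2 : ℝ) : ℂ) =
      ∑' p : ι × ι, a p.1 * conj (a p.2) * (𝐞 (t * (x p.1 - x p.2)) : ℂ) := by
  have hnorm : Summable fun j => ‖a j * (𝐞 (t * x j) : ℂ)‖ := by
    simpa only [norm_mul, Circle.norm_coe, mul_one] using ha.norm
  have hnorm_conj : Summable fun j => ‖conj (a j * (𝐞 (t * x j) : ℂ))‖ := by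
    simpa only [RCLike.norm_conj] using hnorm
  rw [Complex.ofReal_pow, ← Complex.mul_conj', weylSum, Complex.conj_tsum,
    tsum_mul_tsum_of_summable_norm hnorm hnorm_conj]
  refine tsum_congr fun p => ?_
  rw [mul_sub, fourierChar_sub_eq_mul_conj, map_mul (starRingEnd ℂ)]
  ring

theorem tsum_tsum_mul_conj_mul_tsum_fourierChar (ha : Summable a) (hc : Summable c) (x : ι → ℝ)
    (ξ : κ → ℝ) :
    ∑' j, ∑' k, a j * conj (a k) * ∑' m, c m * (𝐞 (ξ m * (x j - x k)) : ℂ) =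
      ∑' m, c m * ((‖weylSum a x (ξ m)‖ ^ 2 : ℝ) : ℂ) := by
  have hweights : Summable fun p : ι × ι => ‖a p.1 * conj (a p.2)‖ :=
    ha.norm.mul_norm (g := fun k => conj (a k)) (by simpa only [RCLike.norm_conj] using ha.norm)
  have hterms : Summable (Function.uncurry fun (p : ι × ι) m =>
      a p.1 * conj (a p.2) * (c m * (𝐞 (ξ m * (x p.1 - x p.2)) : ℂ))) := by
    refine .of_norm ((hweights.mul_norm hc.norm).congr fun q => ?_)
    simp only [Function.uncurry, norm_mul, Circle.norm_coe, mul_one]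
  calc
    _ = ∑' p : ι × ι, ∑' m, a p.1 * conj (a p.2) * (c m * (𝐞 (ξ m * (x p.1 - x p.2)) : ℂ)) := by
      simpa only [Function.uncurry, tsum_mul_left] using hterms.prod.tsum_prod.symm
    _ = ∑' m, ∑' p : ι × ι, a p.1 * conj (a p.2) * (c m * (𝐞 (ξ m * (x p.1 - x p.2)) : ℂ)) :=
      hterms.tsum_comm.symm
    _ = _ := tsum_congr fun m => by
      rw [norm_weylSum_sq ha, ← tsum_mul_left]
      exact tsum_congr fun p => mul_left_comm _ _ _

end WeylSum

section Poisson

open Asymptotics Filter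
open scoped FourierTransform

theorem fourier_comp_mul_left {E : Type*} [NormedAddCommGroup E] [NormedSpace ℂ E] (g : ℝ → E)
    {N : ℝ} (hN : N ≠ 0) (u : ℝ) :
    𝓕 (fun x => g (N * x)) u = |N⁻¹| • 𝓕 g (u / N) := by
  rw [Real.fourier_real_eq, Real.fourier_real_eq,
    ← Measure.integral_comp_mul_left (fun x => 𝐞 (-(x * (u / N))) • g x) N]
  refine integral_congr_ae (.of_forall fun x => ?_)
  have hphase : N * x * (u / N) = x * u := by field_simp
  simp only [hphase]

theorem isBigO_cocompact_comp_mul_left_rpow {E : Type*} [Norm E] {g : ℝ → E} {b : ℝ}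
    (hg : g =O[cocompact ℝ] fun x => |x| ^ b) {N : ℝ} (hN : N ≠ 0) :
    (fun x => g (N * x)) =O[cocompact ℝ] fun x => |x| ^ b := by
  have hdilation : Tendsto (N * ·) (cocompact ℝ) (cocompact ℝ) :=
    (Homeomorph.mulLeft₀ N hN).isClosedEmbedding.tendsto_cocompact
  refine ((hg.comp_tendsto hdilation).congr_right fun x => ?_).trans
    (isBigO_const_mul_self (|N| ^ b) (fun x => |x| ^ b) _)
  rw [Function.comp_apply, abs_mul, Real.mul_rpow (abs_nonneg N) (abs_nonneg x)]

theorem tsum_mul_add_intCast_eq_tsum_fourier {g : ℝ → ℂ} (hg : Continuous g) {b : ℝ} (hb : 1 < b)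
    (hdecay : g =O[cocompact ℝ] fun x => |x| ^ (-b)) {N : ℝ} (hN : N ≠ 0)
    (hsum : Summable fun m : ℤ => 𝓕 g (m / N)) (x : ℝ) :
    ∑' m : ℤ, g (N * (x + m)) = ∑' m : ℤ, |N⁻¹| • 𝓕 g (m / N) * (𝐞 (m * x) : ℂ) := by
  have hsum_dilated : Summable fun m : ℤ => 𝓕 (fun x => g (N * x)) m := by
    simpa only [fourier_comp_mul_left g hN] using hsum.const_smul |N⁻¹|
  rw [Real.tsum_eq_tsum_fourier_of_rpow_decay_of_summable (f := fun x => g (N * x))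
    (by fun_prop) hb (isBigO_cocompact_comp_mul_left_rpow hdecay hN) hsum_dilated]
  refine tsum_congr fun m => ?_
  rw [fourier_comp_mul_left g hN, fourier_coe_apply, Real.fourierChar_apply]
  congr 2
  push_cast
  ring

end Poisson

open scoped FourierTransform in
theorem fhat_eq_fourier (g : ℝ → ℂ) : fhat g = 𝓕 g := by
  ext u
  rw [fhat, Real.fourier_real_eq_integral_exp_smul]
  refine integral_congr_ae (.of_forall fun x => ?_)
  simp only [smul_eq_mul]
  rw [mul_comm]
  congr 2
  push_cast
  ring

theorem thetaSum_eq_weylSum (ψ : ℝ → ℝ) (x y : ℝ) :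
    thetaSum ψ x y = ((y ^ ((1 : ℝ) / 4) : ℝ) : ℂ) *
      weylSum (fun j : ℤ => ((ψ (j * √y) : ℝ) : ℂ)) (fun j => (j : ℝ) ^ 2) x := by
  rw [thetaSum, weylSum]
  congr 1
  refine tsum_congr fun j => ?_
  rw [Real.fourierChar_apply]
  congr 2
  push_cast
  ring

theorem norm_thetaSum_sq (ψ : ℝ → ℝ) (x : ℝ) {y : ℝ} (hy : 0 ≤ y) :
    ‖thetaSum ψ x y‖ ^ 2 = √y *
      ‖weylSum (fun j : ℤ => ((ψ (j * √y) : ℝ) : ℂ)) (fun j => (j : ℝ) ^ 2) x‖ ^ 2 := by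
  have hfactor : (y ^ ((1 : ℝ) / 4)) ^ 2 = √y := by
    rw [← Real.rpow_mul_natCast hy, Real.sqrt_eq_rpow]
    norm_num
  rw [thetaSum_eq_weylSum, norm_mul, mul_pow, Complex.norm_real, Real.norm_eq_abs, sq_abs, hfactor]

theorem norm_thetaSum_one_div_sq_sq (ψ : ℝ → ℝ) (x : ℝ) {N : ℝ} (hN : 0 < N) :
    ‖thetaSum ψ x (1 / N ^ 2)‖ ^ 2 = N⁻¹ *
      ‖weylSum (fun j : ℤ => ((ψ (j / N) : ℝ) : ℂ)) (fun j => (j : ℝ) ^ 2) x‖ ^ 2 := by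
  have hsqrt : √(1 / N ^ 2) = N⁻¹ := by
    rw [one_div, ← inv_pow, Real.sqrt_sq (by positivity)]
  rw [norm_thetaSum_sq ψ x (by positivity), hsqrt]
  simp only [div_eq_mul_inv]

open Asymptotics Filter in
open scoped ComplexConjugate FourierTransform in
theorem stmt_15_general {ψ : ℝ → ℝ} {g : ℝ → ℂ} {b N : ℝ}
    (hψ : Summable fun j : ℤ => ψ (j / N)) (hg : Continuous g) (hb : 1 < b)
    (hdecay : g =O[cocompact ℝ] fun x => |x| ^ (-b))
    (hfhat : Summable fun m : ℤ => fhat g (m / N)) (α : ℝ) (hN : 0 < N) :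
    (1 / (N : ℂ)) * ∑' j : ℤ, ∑' k : ℤ, ((ψ (j / N) * ψ (k / N) : ℝ) : ℂ) *
        ∑' m : ℤ, g (N * (((j : ℝ) ^ 2 - (k : ℝ) ^ 2) * α + m)) =
      (1 / (N : ℂ)) * ∑' m : ℤ,
        fhat g (m / N) * ((‖thetaSum ψ (m * α) (1 / N ^ 2)‖ ^ 2 : ℝ) : ℂ) := by
  rw [fhat_eq_fourier] at hfhat ⊢
  have hweights : Summable fun j : ℤ => ((ψ (j / N) : ℝ) : ℂ) := Complex.summable_ofReal.mpr hψ
  congr 1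
  calc
    _ = ∑' j : ℤ, ∑' k : ℤ, (ψ (j / N) : ℂ) * conj (ψ (k / N) : ℂ) *
          ∑' m : ℤ, |N⁻¹| • 𝓕 g (m / N) * (𝐞 (m * α * ((j : ℝ) ^ 2 - (k : ℝ) ^ 2)) : ℂ) := by
      simp only [tsum_mul_add_intCast_eq_tsum_fourier hg hb hdecay hN.ne' hfhat,
        Complex.ofReal_mul, Complex.conj_ofReal, mul_assoc, mul_comm α]
    _ = ∑' m : ℤ, |N⁻¹| • 𝓕 g (m / N) *
          ((‖weylSum (fun j : ℤ => (ψ (j / N) : ℂ)) (fun j => (j : ℝ) ^ 2) (m * α)‖ ^ 2 : ℝ) : ℂ) :=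
      tsum_tsum_mul_conj_mul_tsum_fourierChar hweights (hfhat.const_smul |N⁻¹|) _ _
    _ = _ := tsum_congr fun m => by
      rw [norm_thetaSum_one_div_sq_sq ψ _ hN, abs_of_pos (inv_pos.mpr hN), Complex.real_smul,
        Complex.ofReal_mul]
      ring

/-- the Poisson-summation identity expressing the smoothed pair correlation
function of `n²α` mod 1 as an average of `|θ_ψ|²` along the points `mα + iN^{−2}`. -/
theorem stmt_15 (ψ : ℝ → ℝ) (hψ : ContDiff ℝ (⊤ : ℕ∞) ψ) (heven : ∀ x : ℝ, ψ (-x) = ψ x)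
    (hψsupp : HasCompactSupport ψ)
    (g : ℝ → ℂ) (hg : Continuous g) (C : ℝ) (hC : 0 < C)
    (hgbd : ∀ x : ℝ, ‖g x‖ ≤ C * (1 + x ^ 2)⁻¹)
    (hfhatcont : Continuous (fhat g)) (hfhatsupp : HasCompactSupport (fhat g))
    (α : ℝ) (N : ℕ) (hN : 1 ≤ N) :
    (1 / (N : ℂ)) * ∑' j : ℤ, ∑' k : ℤ,
        ((ψ ((j : ℝ) / (N : ℝ)) * ψ ((k : ℝ) / (N : ℝ)) : ℝ) : ℂ) *
          ∑' m : ℤ, g ((N : ℝ) * (((j : ℝ) ^ 2 - (k : ℝ) ^ 2) * α + (m : ℝ)))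
      = (1 / (N : ℂ)) * ∑' m : ℤ,
          fhat g ((m : ℝ) / (N : ℝ)) *
            ((‖thetaSum ψ ((m : ℝ) * α) (1 / (N : ℝ) ^ 2)‖ ^ 2 : ℝ) : ℂ) := by
  have hN0 : (0 : ℝ) < N := by exact_mod_cast hN
  simpa only [Complex.ofReal_natCast] using
    stmt_15_general (summable_comp_intCast_div hψsupp hN0.ne') hg one_lt_two
      (isBigO_cocompact_rpow_neg_two hgbd) (summable_comp_intCast_div hfhatsupp hN0.ne') α hN0
end

section
/- Let A be a nonnegative integer and let f : ℍ → ℂ be infinitely differentiable (as a function of the two real coordinates x = Re z, y = Im z), satisfying f(γ·z) = f(z) for all γ ∈ SL(2,ℤ) and z ∈ ℍ, and suppose there exists Y > 0 such that f(z) = 0 whenever 𝒴(z) > Y. Then there exists a constant C > 0 such that |(∂^A/∂x^A) f(x + iy)| ≤ C·y^{−A} for all x ∈ ℝ and all y > 0. -/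
open scoped MatrixGroups UpperHalfPlane

/-- Möbius action of `γ ∈ SL(2,ℤ)` on a complex number. -/
noncomputable def moebC (γ : SL(2, ℤ)) (z : ℂ) : ℂ :=
  (((γ 0 0 : ℤ) : ℂ) * z + ((γ 0 1 : ℤ) : ℂ)) / (((γ 1 0 : ℤ) : ℂ) * z + ((γ 1 1 : ℤ) : ℂ))

/-- The invariant height `𝒴(z) = sup_{γ ∈ SL(2,ℤ)} Im(γ·z)` (zero if `Im z ≤ 0`). -/
noncomputable def invHeightC (z : ℂ) : ℝ :=
  if h : 0 < z.im then ⨆ γ : SL(2, ℤ), (γ • UpperHalfPlane.mk z h).im else 0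

/-! Let `K ⊆ ℍ` be compact, and suppose `γ ∈ SL(2, ℝ)` leaves `f` invariant and moves `z = x + iy`
into `K`. Writing `z = h • i`, we get `f (z + t) = f (γ h • (i + t / y))`. The `A`-th derivative of
`s ↦ f (g • (i + s))` at `0` is continuous in `g`, and `g = γ h` lies in `{g | g • i ∈ K}`, which
is compact because `SL(2, ℝ)` acts properly on `ℍ`; so this derivative is bounded, and the chain
rule contributes the factor `y⁻ᴬ`. If the derivative at `z` is nonzero, then `z` lies in the closure
of the support of `f`, where all `Im (γ • z)` with `γ ∈ SL(2, ℤ)` are at most `Y`; so some `γ` moves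
it into the fundamental domain truncated at height `Y`, which serves as `K`. -/

section IteratedDeriv

variable {𝕜 E F : Type*} [NontriviallyNormedField 𝕜] [NormedAddCommGroup E] [NormedSpace 𝕜 E]
  [NormedAddCommGroup F] [NormedSpace 𝕜 F]

theorem iteratedDeriv_comp_add_smul {n : ℕ} {f : E → F} {x v : E} {t : 𝕜}
    (hf : ContDiffAt 𝕜 n f (x + t • v)) :
    iteratedDeriv n (fun s : 𝕜 ↦ f (x + s • v)) t =
      iteratedFDeriv 𝕜 n f (x + t • v) fun _ ↦ v := by
  induction n generalizing t with
  | zero => simp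
  | succ n ih =>
    have hline : Continuous fun s : 𝕜 ↦ x + s • v := by fun_prop
    have ih_nhds : iteratedDeriv n (fun s : 𝕜 ↦ f (x + s • v)) =ᶠ[nhds t]
        fun s ↦ iteratedFDeriv 𝕜 n f (x + s • v) fun _ ↦ v := by
      filter_upwards [hline.continuousAt.eventually (hf.eventually (by simp))] with s hs
      exact ih (hs.of_le (by simp))
    rw [iteratedDeriv_succ, ih_nhds.deriv_eq, ContDiffAt.deriv_fderiv_add_smul (mod_cast hf)]

theorem continuousAt_iteratedDeriv_prodMk {n : ℕ} {f : E × 𝕜 → F} {p : E} {t : 𝕜}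
    (hf : ContDiffAt 𝕜 n f (p, t)) :
    ContinuousAt (fun q ↦ iteratedDeriv n (fun s ↦ f (q, s)) t) p := by
  have hincl : ContinuousAt (fun q : E ↦ (q, t)) p := by fun_prop
  have partial_eq : (fun q ↦ iteratedDeriv n (fun s ↦ f (q, s)) t) =ᶠ[nhds p]
      fun q ↦ iteratedFDeriv 𝕜 n f (q, t) fun _ ↦ (0, 1) := by
    filter_upwards [hincl.eventually (hf.eventually (by simp))] with q hq
    simpa using iteratedDeriv_comp_add_smul (f := f) (x := (q, (0 : 𝕜))) (v := (0, 1)) (t := t)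
      (by simpa using hq)
  have hcont : ContinuousAt (iteratedFDeriv 𝕜 n f) (p, t) :=
    (hf.iteratedFDeriv_right (m := 0) (by simp)).continuousAt
  exact ((hcont.comp_of_eq hincl rfl).eval_const _).congr partial_eq.symm

theorem support_iteratedDeriv_subset (n : ℕ) (f : 𝕜 → F) :
    Function.support (iteratedDeriv n f) ⊆ tsupport f := by
  intro t ht
  apply support_iteratedFDeriv_subset (𝕜 := 𝕜) n
  rwa [Function.mem_support, ← norm_ne_zero_iff, norm_iteratedFDeriv_eq_norm_iteratedDeriv,
    norm_ne_zero_iff]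

end IteratedDeriv

section Moebius

open scoped Matrix.Norms.Elementwise

/-- The Möbius transformation of a real `2 × 2` matrix, on all of `ℂ`. Unlike the action of
`SL(2, ℝ)` on `ℍ`, it is a map between open subsets of normed spaces, so it can be differentiated
jointly in the matrix and the point. -/
noncomputable def moebius (g : Matrix (Fin 2) (Fin 2) ℝ) (z : ℂ) : ℂ :=
  (g 0 0 * z + g 0 1) / (g 1 0 * z + g 1 1)

theorem moebius_coe_eq_smul (g : SL(2, ℝ)) (z : ℍ) : moebius g z = ↑(g • z) :=
  (UpperHalfPlane.coe_specialLinearGroup_apply g z).symm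

theorem contDiffAt_moebius {n : WithTop ℕ∞} {g : Matrix (Fin 2) (Fin 2) ℝ} {z : ℂ}
    (hz : (g 1 0 * z + g 1 1 : ℂ) ≠ 0) :
    ContDiffAt ℝ n (fun p : Matrix (Fin 2) (Fin 2) ℝ × ℂ ↦ moebius p.1 p.2) (g, z) := by
  have hentry (i j : Fin 2) :
      ContDiff ℝ n fun p : Matrix (Fin 2) (Fin 2) ℝ × ℂ ↦ (p.1 i j : ℂ) :=
    Complex.ofRealCLM.contDiff.comp
      ((contDiff_apply_apply (n := n) ℝ ℝ i j).comp (contDiff_fst (E := Fin 2 → Fin 2 → ℝ)))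
  have hnum : ContDiff ℝ n fun p : Matrix (Fin 2) (Fin 2) ℝ × ℂ ↦ p.1 0 0 * p.2 + p.1 0 1 :=
    ((hentry 0 0).mul contDiff_snd).add (hentry 0 1)
  have hdenom : ContDiff ℝ n fun p : Matrix (Fin 2) (Fin 2) ℝ × ℂ ↦ p.1 1 0 * p.2 + p.1 1 1 :=
    ((hentry 1 0).mul contDiff_snd).add (hentry 1 1)
  simp only [moebius, div_eq_mul_inv]
  exact hnum.contDiffAt.mul (hdenom.contDiffAt.inv hz)

end Moebius

section Horocycle

open UpperHalfPlane
open scoped Matrix.Norms.Elementwise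

variable {E : Type*} [NormedAddCommGroup E] [NormedSpace ℝ E] {f : ℂ → E}

theorem contDiffAt_comp_moebius_vadd_I {n : WithTop ℕ∞}
    (hf : ContDiffOn ℝ n f {z : ℂ | 0 < z.im})
    (g : SL(2, ℝ)) (s : ℝ) :
    ContDiffAt ℝ n (fun p : Matrix (Fin 2) (Fin 2) ℝ × ℝ ↦ f (moebius p.1 (p.2 + Complex.I)))
      ((g : Matrix (Fin 2) (Fin 2) ℝ), s) := by
  have hpoint : moebius g (s + Complex.I) = ↑(g • (s +ᵥ I)) := by
    simp [← moebius_coe_eq_smul]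
  have hf_at : ContDiffAt ℝ n f (moebius g (s + Complex.I)) :=
    hf.contDiffAt (isOpen_upperHalfPlaneSet.mem_nhds (hpoint ▸ (g • (s +ᵥ I)).im_pos))
  have hdenom : (g 1 0 * (s + Complex.I) + g 1 1 : ℂ) ≠ 0 := by
    simpa [denom] using denom_ne_zero g (s +ᵥ I)
  have hcurve : ContDiff ℝ n
      fun p : Matrix (Fin 2) (Fin 2) ℝ × ℝ ↦ (p.1, (p.2 + Complex.I : ℂ)) :=
    contDiff_fst.prodMk ((Complex.ofRealCLM.contDiff.comp contDiff_snd).add contDiff_const)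
  have hmoebius : ContDiffAt ℝ n
      (fun p : Matrix (Fin 2) (Fin 2) ℝ × ℝ ↦ moebius p.1 (p.2 + Complex.I)) (g.1, s) :=
    ContDiffAt.comp (g := fun p : Matrix (Fin 2) (Fin 2) ℝ × ℂ ↦ moebius p.1 p.2) (g.1, s)
      (contDiffAt_moebius hdenom) hcurve.contDiffAt
  exact hf_at.comp (g.1, s) hmoebius

theorem continuous_iteratedDeriv_smul_vadd_I {n : ℕ}
    (hf : ContDiffOn ℝ n f {z : ℂ | 0 < z.im}) :
    Continuous fun g : SL(2, ℝ) ↦ iteratedDeriv n (fun s : ℝ ↦ f ↑(g • (s +ᵥ I))) 0 := by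
  rw [continuous_iff_continuousAt]
  intro g
  have hmatrix := continuousAt_iteratedDeriv_prodMk (contDiffAt_comp_moebius_vadd_I hf g 0)
  have hval : Continuous fun g : SL(2, ℝ) ↦ (g : Matrix (Fin 2) (Fin 2) ℝ) :=
    continuous_subtype_val
  simp only [← moebius_coe_eq_smul, coe_vadd, coe_I]
  exact hmatrix.comp_of_eq hval.continuousAt rfl

theorem contDiff_smul_vadd_I {n : WithTop ℕ∞}
    (hf : ContDiffOn ℝ n f {z : ℂ | 0 < z.im}) (g : SL(2, ℝ)) :
    ContDiff ℝ n fun s : ℝ ↦ f ↑(g • (s +ᵥ I)) := by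
  rw [contDiff_iff_contDiffAt]
  intro s
  have hincl : ContDiffAt ℝ n (fun s : ℝ ↦ ((g : Matrix (Fin 2) (Fin 2) ℝ), s)) s := by fun_prop
  simp only [← moebius_coe_eq_smul, coe_vadd, coe_I]
  exact (contDiffAt_comp_moebius_vadd_I hf g s).comp s hincl

theorem toSL2R_smul_vadd_I (z : ℍ) (s : ℝ) : z.toSL2R • (s +ᵥ I) = (z.im * s) +ᵥ z := by
  have hsqrt : (√z.im : ℂ) ≠ 0 := by simpa [Real.sqrt_ne_zero'] using z.im_pos
  have hsq : (√z.im : ℂ) ^ 2 = z.im := by rw [← Complex.ofReal_pow, Real.sq_sqrt z.im_pos.le]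
  ext1
  rw [← moebius_coe_eq_smul, coe_vadd, coe_vadd, ← re_add_im z]
  simp only [moebius, coe_toSL2R, Matrix.of_apply, Matrix.cons_val', Matrix.cons_val_zero,
    Matrix.cons_val_fin_one, Matrix.cons_val_one, coe_I, one_div, Complex.ofReal_div,
    Complex.ofReal_zero, Complex.ofReal_inv, Complex.ofReal_mul, zero_mul, zero_add,
    div_inv_eq_mul]
  field_simp
  rw [hsq]
  ring

theorem iteratedDeriv_vadd_eq_smul {n : ℕ} (hf : ContDiffOn ℝ n f {z : ℂ | 0 < z.im})
    {g : SL(2, ℝ)} (hg : ∀ w : ℍ, f ↑(g • w) = f w) (z : ℍ) :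
    iteratedDeriv n (fun t : ℝ ↦ f ↑(t +ᵥ z)) 0 =
      z.im⁻¹ ^ n • iteratedDeriv n (fun s : ℝ ↦ f ↑((g * z.toSL2R) • (s +ᵥ I))) 0 := by
  have hrescale : (fun t : ℝ ↦ f ↑(t +ᵥ z)) =
      fun t ↦ f ↑((g * z.toSL2R) • ((z.im⁻¹ * t) +ᵥ I)) := by
    funext t
    rw [mul_smul, hg, toSL2R_smul_vadd_I, mul_inv_cancel_left₀ z.im_ne_zero]
  simp only [hrescale, iteratedDeriv_comp_const_smul (contDiff_smul_vadd_I hf _), mul_zero]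

theorem exists_norm_iteratedDeriv_vadd_le {n : ℕ}
    (hf : ContDiffOn ℝ n f {z : ℂ | 0 < z.im}) {K : Set ℍ} (hK : IsCompact K) :
    ∃ C : ℝ, ∀ (g : SL(2, ℝ)) (z : ℍ), (∀ w : ℍ, f ↑(g • w) = f w) → g • z ∈ K →
      ‖iteratedDeriv n (fun t : ℝ ↦ f ↑(t +ᵥ z)) 0‖ ≤ C / z.im ^ n := by
  obtain ⟨C, hC⟩ := (isProperMap_smul_I.isCompact_preimage hK).exists_bound_of_continuousOn
    (continuous_iteratedDeriv_smul_vadd_I hf).continuousOn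
  refine ⟨C, fun g z hg hz ↦ ?_⟩
  have hmem : (g * z.toSL2R) • I ∈ K := by rwa [mul_smul, toSL2R_smul_I]
  rw [iteratedDeriv_vadd_eq_smul hf hg, norm_smul, norm_pow, norm_inv,
    Real.norm_of_nonneg z.im_pos.le, inv_pow, inv_mul_eq_div]
  gcongr
  exact hC _ hmem

end Horocycle

section Modular

open UpperHalfPlane

theorem moebC_coe_eq_smul (γ : SL(2, ℤ)) (z : ℍ) : moebC γ z = ↑(γ • z) := by
  rw [coe_specialLinearGroup_apply]
  simp [moebC]

theorem map_castRingHom_smul (γ : SL(2, ℤ)) (z : ℍ) :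
    (γ.map (Int.castRingHom ℝ)) • z = γ • z := by
  ext1
  rw [coe_specialLinearGroup_apply, coe_specialLinearGroup_apply]
  simp

theorem im_smul_le_invHeightC (γ : SL(2, ℤ)) (z : ℍ) : (γ • z).im ≤ invHeightC z := by
  rw [invHeightC, dif_pos (c := 0 < (z : ℂ).im) z.im_pos]
  obtain ⟨γ₀, hmax⟩ := ModularGroup.exists_max_im z
  exact le_ciSup (f := fun γ : SL(2, ℤ) ↦ (γ • z).im)
    ⟨_, Set.forall_mem_range.mpr hmax⟩ γ

theorem im_smul_le_of_mem_tsupport_vadd {E : Type*} [Zero E] {f : ℂ → E} {Y : ℝ}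
    (hvanish : ∀ z : ℂ, 0 < z.im → Y < invHeightC z → f z = 0) (γ : SL(2, ℤ)) {z : ℍ} {t : ℝ}
    (ht : t ∈ tsupport fun s : ℝ ↦ f ↑(s +ᵥ z)) : (γ • (t +ᵥ z)).im ≤ Y := by
  have hclosed : IsClosed {s : ℝ | (γ • (s +ᵥ z)).im ≤ Y} := by
    refine isClosed_le ?_ continuous_const
    have hcurve : Continuous fun s : ℝ ↦ s +ᵥ z := by
      rw [isEmbedding_coe.continuous_iff]
      simp only [Function.comp_def, coe_vadd]
      fun_prop
    simp only [← map_castRingHom_smul]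
    exact continuous_im.comp (hcurve.const_smul (γ.map (Int.castRingHom ℝ)))
  refine closure_minimal (fun s hs ↦ ?_) hclosed ht
  by_contra hlt
  rw [Set.mem_ofPred_eq, not_le] at hlt
  exact hs (hvanish _ (s +ᵥ z).im_pos (lt_of_lt_of_le hlt (im_smul_le_invHeightC γ _)))

theorem stmt_17_general {E : Type*} [NormedAddCommGroup E] [NormedSpace ℝ E] (A : ℕ)
    (f : ℂ → E) (hsmooth : ContDiffOn ℝ A f {z : ℂ | 0 < z.im})
    (hinv : ∀ γ : SL(2, ℤ), ∀ z : ℂ, 0 < z.im → f (moebC γ z) = f z)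
    (Y : ℝ) (hvanish : ∀ z : ℂ, 0 < z.im → Y < invHeightC z → f z = 0) :
    ∃ C : ℝ, 0 < C ∧ ∀ x y : ℝ, 0 < y →
      ‖iteratedDeriv A (fun t : ℝ => f ⟨t, y⟩) x‖ ≤ C / y ^ A := by
  obtain ⟨C, hC⟩ := exists_norm_iteratedDeriv_vadd_le hsmooth
    (ModularGroup.isCompact_truncatedFundamentalDomain Y)
  refine ⟨max C 1, by positivity, fun x y hy ↦ ?_⟩
  let z : ℍ := ⟨⟨x, y⟩, hy⟩
  have hshift : iteratedDeriv A (fun t : ℝ ↦ f ⟨t, y⟩) x =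
      iteratedDeriv A (fun t : ℝ ↦ f ↑(t +ᵥ z)) 0 := by
    have hcurve (t : ℝ) : ((t +ᵥ z : ℍ) : ℂ) = ⟨t + x, y⟩ := by
      apply Complex.ext <;> simp [z]
    simp only [hcurve, iteratedDeriv_comp_add_const A (fun t : ℝ ↦ f ⟨t, y⟩), zero_add]
  rw [hshift]
  rcases eq_or_ne (iteratedDeriv A (fun t : ℝ ↦ f ↑(t +ᵥ z)) 0) 0 with hzero | hne
  · rw [hzero, norm_zero]
    positivity
  obtain ⟨γ, hγ⟩ := ModularGroup.exists_smul_mem_fd z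
  have him : (γ • z).im ≤ Y := by
    simpa using im_smul_le_of_mem_tsupport_vadd hvanish γ (support_iteratedDeriv_subset A _ hne)
  have hγ_inv (w : ℍ) : f ↑(γ.map (Int.castRingHom ℝ) • w) = f w := by
    rw [map_castRingHom_smul, ← moebC_coe_eq_smul, hinv γ w w.im_pos]
  have hγ_mem : γ.map (Int.castRingHom ℝ) • z ∈ ModularGroup.truncatedFundamentalDomain Y := by
    rw [map_castRingHom_smul]
    exact ⟨hγ, him⟩
  calc ‖iteratedDeriv A (fun t : ℝ ↦ f ↑(t +ᵥ z)) 0‖ ≤ C / y ^ A := hC _ z hγ_inv hγ_mem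
    _ ≤ max C 1 / y ^ A := by gcongr; exact le_max_left C 1

end Modular

/-- For a smooth `SL(2,ℤ)`-invariant function `f` on the upper half-plane,
vanishing wherever `𝒴(z) > Y`, the `A`-th `x`-derivative satisfies
`|(∂^A/∂x^A) f(x+iy)| ≤ C·y^{−A}`. -/
theorem stmt_17 (A : ℕ) (f : ℂ → ℂ)
    (hsmooth : ContDiffOn ℝ (⊤ : ℕ∞) f {z : ℂ | 0 < z.im})
    (hinv : ∀ γ : SL(2, ℤ), ∀ z : ℂ, 0 < z.im → f (moebC γ z) = f z)
    (Y : ℝ) (hY : 0 < Y)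
    (hvanish : ∀ z : ℂ, 0 < z.im → Y < invHeightC z → f z = 0) :
    ∃ C : ℝ, 0 < C ∧ ∀ x y : ℝ, 0 < y →
      ‖iteratedDeriv A (fun t : ℝ => f ⟨t, y⟩) x‖ ≤ C / y ^ A := by
  exact stmt_17_general A f (hsmooth.of_le (mod_cast le_top)) hinv Y hvanish
end
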